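/- arXiv:1807.08358 — 2 statements merged into one kernel-verified Lean document; each statement's English description precedes it below -/
import Mathlib

section
/- Let G be a finite group of order 2^n (n ≥ 3) with nilpotency class n − 2 (i.e., G is a 2-group of coclass 2). Then the automorphism group Aut(G) fails to be a 2-group if and only if G is isomorphic to one of the following three groups: (1) the elementary abelian group C2 × C2 × C2; (2) Q8 × C2, the direct product of the quaternion group of order 8 with the cyclic group of order 2; (3) the group P of order 16 with presentation ⟨a, b, c | a⁴ = b² = c² = 1, b^a = b, c^a = c, b^c = a²b⟩ (where x^y denotes y⁻¹xy). -/
/-- Generators for the group `P = ⟨a, b, c ∣ a⁴ = b² = c² = 1, bᵃ = b, cᵃ = c, bᶜ = a²b⟩`. -/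
inductive PGen : Type
  | a | b | c

namespace PGen

def fa : FreeGroup PGen := FreeGroup.of PGen.a
def fb : FreeGroup PGen := FreeGroup.of PGen.b
def fc : FreeGroup PGen := FreeGroup.of PGen.c

/-- Relators of `P`: `a⁴`, `b²`, `c²`, `(a⁻¹ba)b⁻¹`, `(a⁻¹ca)c⁻¹`, `(c⁻¹bc)(a²b)⁻¹`. -/
def Prels : Set (FreeGroup PGen) :=
  {fa ^ 4, fb ^ 2, fc ^ 2,
   fa⁻¹ * fb * fa * fb⁻¹,
   fa⁻¹ * fc * fa * fc⁻¹,
   fc⁻¹ * fb * fc * (fa ^ 2 * fb)⁻¹}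

end PGen

/-- The group `P = ⟨a, b, c ∣ a⁴ = b² = c² = 1, bᵃ = b, cᵃ = c, bᶜ = a²b⟩`
(of order `16` and coclass `2`). -/
abbrev PGroup16 : Type := PresentedGroup PGen.Prels


theorem aux_fix_card {X : Type*} (f : X → X) {p : ℕ} (hp : p.Prime) (hf : ∀ x, f^[p] x = x)
    (S : Set X) [Finite S] (hS : ∀ x ∈ S, f x ∈ S) :
    Nat.card S ≡ Nat.card {x : X // x ∈ S ∧ f x = x} [MOD p] := by
  classical
  have := Fact.mk hp
  have := Fintype.ofFinite S
  let g : Function.End S := fun x => ⟨f x, hS x x.2⟩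
  have hit : ∀ (k : ℕ) (x : S), (((g ^ k : Function.End S) x : S) : X) = f^[k] x := by
    intro k
    induction k with
    | zero => intro x; rfl
    | succ k ih =>
      intro x
      rw [pow_succ, Function.iterate_succ_apply]
      exact ih (g x)
  have hg : g ^ p ^ 1 = 1 := by
    funext x
    apply Subtype.ext
    rw [pow_one, hit, hf]
    rfl
  have h := Equiv.Perm.card_fixedPoints_modEq hg
  rw [← Nat.card_eq_fintype_card, ← Nat.card_eq_fintype_card] at h
  refine h.trans ?_
  have e : Function.fixedPoints g ≃ {x : X // x ∈ S ∧ f x = x} :=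
    { toFun := fun x => ⟨x.1, x.1.2, congrArg Subtype.val x.2⟩
      invFun := fun x => ⟨⟨x.1, x.2.1⟩, Subtype.ext x.2.2⟩
      left_inv := fun x => rfl
      right_inv := fun x => rfl }
  rw [Nat.card_congr e]

/-- numeric classification -/
theorem aux_num {p m F : ℕ} (hp : p.Prime) (hp2 : p ≠ 2) (hm : m ≤ 3) (hF : F ∣ 2 ^ m)
    (hlt : F < 2 ^ m) (h : 2 ^ m ≡ F [MOD p]) :
    (m = 2 ∧ p = 3 ∧ F = 1) ∨ (m = 3 ∧ p = 3 ∧ F = 2) ∨ (m = 3 ∧ p = 7 ∧ F = 1) := by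
  have h1 := (Nat.modEq_iff_dvd' hlt.le).1 h.symm
  obtain ⟨k, hk, rfl⟩ := (Nat.dvd_prime_pow Nat.prime_two).1 hF
  have key : ∀ j, p ∣ 2 ^ j → False := fun j hj => hp2 ((Nat.prime_dvd_prime_iff_eq hp Nat.prime_two).1 (hp.dvd_of_dvd_pow hj))
  have p1 := hp.one_lt
  interval_cases m <;> interval_cases k <;> (first | (exfalso; revert hlt; norm_num; done) | skip) <;>
    norm_num at h1 ⊢
  · omega
  · exact (Nat.prime_dvd_prime_iff_eq hp Nat.prime_three).1 h1
  · exact (key 1 h1).elim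
  · exact (Nat.prime_dvd_prime_iff_eq hp (by norm_num)).1 h1
  · rw [show 6 = 2 ^ 1 * 3 by norm_num] at h1
    rcases hp.dvd_mul.1 h1 with h | h
    · exact (key 1 h).elim
    · exact (Nat.prime_dvd_prime_iff_eq hp Nat.prime_three).1 h
  · exact (key 2 h1).elim

theorem aux_num2 {p m F E : ℕ}
    (h : (m = 2 ∧ p = 3 ∧ F = 1) ∨ (m = 3 ∧ p = 3 ∧ F = 2) ∨ (m = 3 ∧ p = 7 ∧ F = 1))
    (hE : E ∣ 2 ^ m) (hlt : F < E) (hEF : E ≡ F [MOD p]) : E = 2 ^ m := by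
  obtain ⟨k, hk, rfl⟩ := (Nat.dvd_prime_pow Nat.prime_two).1 hE
  rcases h with ⟨rfl, rfl, rfl⟩ | ⟨rfl, rfl, rfl⟩ | ⟨rfl, rfl, rfl⟩ <;>
    interval_cases k <;> simp_all [Nat.ModEq]

/-- structure of the abelianization -/
theorem aux_abelian {A : Type*} [CommGroup A] [Finite A] {m p : ℕ} (hA : Nat.card A = 2 ^ m)
    (hm : m ≤ 3) (hp : p.Prime) (hp2 : p ≠ 2) (φ : A →* A) (hφ : ∀ a, φ^[p] a = a)
    (hne : ∃ a, φ a ≠ a) :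
    (∀ a : A, a ^ 2 = 1) ∧
    ((∃ x z : A, (z = 1 ∨ m = 3) ∧ φ (φ (φ x)) = x ∧ φ z = z ∧
        Subgroup.closure {x, φ x, z} = ⊤ ∧ x * φ x * φ (φ x) = 1) ∨
     (p = 7 ∧ m = 3 ∧ ∀ a, φ a = a → a = 1)) := by
  classical
  let Fix : Subgroup A := 
    { carrier := {a | φ a = a}
      one_mem' := map_one φ
      mul_mem' := by intro a b ha hb; simp_all
      inv_mem' := by intro a ha; simp_all }
  have memFix : ∀ a, a ∈ Fix ↔ φ a = a := fun a => Iff.rfl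
  have cnt : ∀ S : Subgroup A, (∀ x ∈ S, φ x ∈ S) → Fix ≤ S →
      Nat.card S ≡ Nat.card Fix [MOD p] := by
    intro S hS hFS
    have := aux_fix_card φ hp hφ (S : Set A) hS
    refine this.trans ?_
    have : Nat.card {x : A // x ∈ (S : Set A) ∧ φ x = x} = Nat.card Fix :=
      Nat.card_congr (Equiv.subtypeEquivRight fun x => ⟨fun h => h.2, fun h => ⟨hFS h, h⟩⟩)
    rw [this]
  obtain ⟨a0, ha0⟩ := hne
  have hFixlt : Nat.card Fix < 2 ^ m := by
    rw [← hA]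
    have : Fix ≠ ⊤ := fun h => ha0 ((memFix a0).1 (h ▸ Subgroup.mem_top a0))
    refine lt_of_le_of_ne (Subgroup.card_le_card_group Fix) ?_
    intro h
    exact this (Subgroup.eq_top_of_card_eq Fix h)
  have hFixdvd : Nat.card Fix ∣ 2 ^ m := hA ▸ Subgroup.card_subgroup_dvd_card Fix
  have hmod : 2 ^ m ≡ Nat.card Fix [MOD p] := by
    have := cnt ⊤ (by simp) le_top
    rwa [Subgroup.card_top, hA] at this
  have hcl := aux_num hp hp2 hm hFixdvd hFixlt hmod
  have top : ∀ S : Subgroup A, (∀ x ∈ S, φ x ∈ S) → Fix ≤ S → (∃ x ∈ S, φ x ≠ x) → S = ⊤ := by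
    intro S hS hFS ⟨x, hxS, hx⟩
    apply Subgroup.eq_top_of_card_eq
    rw [hA]
    apply aux_num2 hcl (hA ▸ Subgroup.card_subgroup_dvd_card S) _ (cnt S hS hFS)
    have hlt : Fix < S := lt_of_le_of_ne hFS (fun h => hx ((memFix x).1 (h ▸ hxS)))
    exact Set.Finite.card_lt_card (Set.toFinite _) hlt
  have hFix2 : ∀ a, φ a = a → a ^ 2 = 1 := by
    intro a ha
    have h1 : (⟨a, ha⟩ : Fix) ^ Nat.card Fix = 1 := pow_card_eq_one'
    have h2 : a ^ Nat.card Fix = 1 := congrArg Subtype.val h1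
    rcases hcl with ⟨-, -, h⟩ | ⟨-, -, h⟩ | ⟨-, -, h⟩ <;> rw [h] at h2 <;> simp_all
  have hsq : ∀ a : A, a ^ 2 = 1 := by
    let T : Subgroup A := (powMonoidHom 2 : A →* A).ker
    have memT : ∀ a, a ∈ T ↔ a ^ 2 = 1 := fun a => by simp [T, MonoidHom.mem_ker]
    have : T = ⊤ := by
      apply top T
      · intro x hx
        rw [memT] at hx ⊢
        rw [← map_pow, hx, map_one]
      · intro x hx
        exact (memT x).2 (hFix2 x hx)
      · obtain ⟨x, hx, hx2⟩ : ∃ x, φ x ≠ x ∧ φ (x ^ 2) = x ^ 2 := by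
          by_contra hcon
          push Not at hcon
          have : ∀ k, φ (a0 ^ 2 ^ k) ≠ a0 ^ 2 ^ k := by
            intro k
            induction k with
            | zero => simpa using ha0
            | succ k ih => 
              have := hcon _ ih
              rwa [← pow_mul, ← pow_succ] at this
          apply this m
          rw [← hA, pow_card_eq_one', map_one]
        refine ⟨x⁻¹ * φ x, ?_, ?_⟩
        · rw [memT, mul_pow, ← map_pow, hx2, inv_pow, inv_mul_cancel]
        · intro he
          set e := x⁻¹ * φ x with hedef
          have hxe : φ x = x * e := by simp [hedef]
          have he2 : e ^ 2 = 1 := hFix2 e he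
          have hit : ∀ k, φ^[k] x = x * e ^ k := by
            intro k
            induction k with
            | zero => simp
            | succ k ih => rw [Function.iterate_succ_apply', ih, map_mul, map_pow, he, hxe, pow_succ', mul_assoc]
          have h1 := hit p
          rw [hφ] at h1
          have h2 : e ^ p = 1 := by simpa using h1.symm
          have : e = 1 := by
            have hodd := hp.odd_of_ne_two hp2
            obtain ⟨r, hr⟩ := hodd
            rw [hr, pow_succ, pow_mul, he2, one_pow, one_mul] at h2
            exact h2
          rw [this, mul_one] at hxe
          exact hx hxe
    intro a
    rw [← memT, this]; trivial
  refine ⟨hsq, ?_⟩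
  have case3 : ∀ z, p = 3 → φ z = z → (z = 1 ∨ m = 3) → (∀ a, φ a = a → a = 1 ∨ a = z) → 
      (∃ x z : A, (z = 1 ∨ m = 3) ∧ φ (φ (φ x)) = x ∧ φ z = z ∧
        Subgroup.closure {x, φ x, z} = ⊤ ∧ x * φ x * φ (φ x) = 1) := by
    intro z hp3 hz hz1 hzz
    subst hp3
    have h3 : ∀ a, φ (φ (φ a)) = a := fun a => hφ a
    set n := a0 * φ a0 * φ (φ a0) with hn
    have hnfix : φ n = n := by
      rw [hn]; simp only [map_mul, h3]
      rw [mul_comm, mul_assoc]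
    have hx0 : (a0 * n) * φ (a0 * n) * φ (φ (a0 * n)) = 1 := by
      simp only [map_mul, hnfix]
      calc a0 * n * (φ a0 * n) * (φ (φ a0) * n) = (a0 * φ a0 * φ (φ a0)) * n * n ^ 2 := by
            rw [pow_two]; ac_rfl
        _ = 1 := by rw [← hn, hsq, mul_one, ← pow_two, hsq]
    have hxne : φ (a0 * n) ≠ a0 * n := by
      rw [map_mul, hnfix]; simpa using ha0
    generalize a0 * n = x at hx0 hxne
    refine ⟨x, z, hz1, h3 x, hz, ?_, hx0⟩
    have m1 : x ∈ Subgroup.closure {x, φ x, z} := Subgroup.subset_closure (by simp)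
    have m2 : φ x ∈ Subgroup.closure {x, φ x, z} := Subgroup.subset_closure (by simp)
    have m3 : z ∈ Subgroup.closure {x, φ x, z} := Subgroup.subset_closure (by simp)
    apply top
    · intro y hy
      have : Subgroup.closure {x, φ x, z} ≤ (Subgroup.closure {x, φ x, z}).comap φ := by
        rw [Subgroup.closure_le]
        rintro y (rfl | rfl | rfl)
        · exact m2
        · have : φ (φ x) = (x * φ x)⁻¹ := (inv_eq_of_mul_eq_one_right hx0).symm
          rw [SetLike.mem_coe, Subgroup.mem_comap, this]
          exact inv_mem (mul_mem m1 m2)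
        · rw [SetLike.mem_coe, Subgroup.mem_comap, hz]; exact m3
      exact this hy
    · intro a ha
      rcases hzz a ha with rfl | rfl
      · exact one_mem _
      · exact m3
    · exact ⟨x, m1, hxne⟩
  have fix1 : Nat.card Fix = 1 → ∀ a, φ a = a → a = 1 := by
    intro h a ha
    have := Subgroup.card_eq_one.1 h
    have h2 : a ∈ Fix := ha
    rwa [this, Subgroup.mem_bot] at h2
  rcases hcl with ⟨hm2, hp3, h⟩ | ⟨hm3, hp3, h⟩ | ⟨hm3, hp7, h⟩
  · left
    exact case3 1 hp3 (map_one _) (Or.inl rfl) (fun a ha => Or.inl (fix1 h a ha))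
  · left
    obtain ⟨u, v, huv, huniv⟩ := Nat.card_eq_two_iff.1 h
    have hall : ∀ a : Fix, a = u ∨ a = v := fun a => by
      have : a ∈ ({u, v} : Set Fix) := huniv ▸ Set.mem_univ a
      simpa using this
    rcases hall 1 with h1 | h1
    · refine case3 v.1 hp3 v.2 (Or.inr hm3) ?_
      intro a ha
      rcases hall ⟨a, ha⟩ with h | h
      · left; rw [← h1] at h; exact congrArg Subtype.val h
      · right; exact congrArg Subtype.val h
    · refine case3 u.1 hp3 u.2 (Or.inr hm3) ?_
      intro a ha
      rcases hall ⟨a, ha⟩ with h | h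
      · right; exact congrArg Subtype.val h
      · left; rw [← h1] at h; exact congrArg Subtype.val h
  · right
    exact ⟨hp7, hm3, fix1 h⟩


open scoped commutatorElement

theorem aux_comm_le {G : Type*} [Group G] (T : Subgroup G) [T.Normal] (X : Set G)
    (hX : Subgroup.closure X = ⊤) (h : ∀ a ∈ X, ∀ b ∈ X, ⁅a, b⁆ ∈ T) : commutator G ≤ T := by
  have key : ∀ a b : G, ⁅a, b⁆ ∈ T ↔ Commute (QuotientGroup.mk' T a) (QuotientGroup.mk' T b) := by
    intro a b
    rw [← commutatorElement_eq_one_iff_commute, ← map_commutatorElement, QuotientGroup.mk'_apply,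
      QuotientGroup.eq_one_iff]
  have h1 : ∀ a ∈ X, ∀ g : G, Commute (QuotientGroup.mk' T a) (QuotientGroup.mk' T g) := by
    intro a ha g
    have : Subgroup.closure X ≤ (Subgroup.centralizer {QuotientGroup.mk' T a}).comap (QuotientGroup.mk' T) := by
      rw [Subgroup.closure_le]
      intro b hb
      rw [SetLike.mem_coe, Subgroup.mem_comap, Subgroup.mem_centralizer_singleton_iff]
      exact ((key a b).1 (h a ha b hb)).symm.eq
    have hg : g ∈ Subgroup.closure X := hX ▸ Subgroup.mem_top g
    have := this hg
    rw [Subgroup.mem_comap, Subgroup.mem_centralizer_singleton_iff] at this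
    exact (show Commute _ _ from this).symm
  have h2 : Subgroup.closure X ≤ (Subgroup.center (G ⧸ T)).comap (QuotientGroup.mk' T) := by
    rw [Subgroup.closure_le]
    intro a ha
    rw [SetLike.mem_coe, Subgroup.mem_comap, Subgroup.mem_center_iff]
    intro q
    obtain ⟨g, rfl⟩ := QuotientGroup.mk'_surjective T q
    exact (h1 a ha g).symm.eq
  rw [commutator_eq_closure, Subgroup.closure_le]
  rintro _ ⟨a, b, rfl⟩
  rw [SetLike.mem_coe, key]
  have ha : a ∈ Subgroup.closure X := hX ▸ Subgroup.mem_top a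
  have := h2 ha
  rw [Subgroup.mem_comap, Subgroup.mem_center_iff] at this
  exact (show Commute _ _ from (this _)).symm

theorem aux_comm_mul_left {G : Type*} [Group G] (a b c : G)
    (h : ⁅b, c⁆ ∈ Subgroup.center G) : ⁅a * b, c⁆ = ⁅a, c⁆ * ⁅b, c⁆ := by
  have h1 := Subgroup.mem_center_iff.1 h
  have : ⁅a * b, c⁆ = a * ⁅b, c⁆ * a⁻¹ * ⁅a, c⁆ := by
    simp only [commutatorElement_def]; group
  rw [this, h1 a, mul_inv_cancel_right, h1]

theorem aux_comm_mul_right {G : Type*} [Group G] (a b c : G)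
    (h : ⁅a, c⁆ ∈ Subgroup.center G) : ⁅a, b * c⁆ = ⁅a, b⁆ * ⁅a, c⁆ := by
  have h1 := Subgroup.mem_center_iff.1 h
  have : ⁅a, b * c⁆ = ⁅a, b⁆ * (b * ⁅a, c⁆ * b⁻¹) := by
    simp only [commutatorElement_def]; group
  rw [this, h1 b, mul_inv_cancel_right]

/-- Lemma B: class at most 2. -/
theorem aux_B {H : Type*} [Group H] (x y z : H) (hcl : Subgroup.closure {x, y, z} = ⊤)
    (hxz : ⁅x, z⁆ ∈ Subgroup.center H) (hyz : ⁅y, z⁆ ∈ Subgroup.center H)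
    (hx : x ^ 2 * ⁅x, y⁆⁻¹ ∈ Subgroup.center H) (hy : y ^ 2 * ⁅x, y⁆⁻¹ ∈ Subgroup.center H) :
    commutator H ≤ Subgroup.center H := by
  set t := ⁅x, y⁆ with ht
  have aux : ∀ u : H, u ^ 2 * t⁻¹ ∈ Subgroup.center H → Commute u t := by
    intro u hu
    have h1 := Subgroup.mem_center_iff.1 hu
    have h2 : t = (u ^ 2 * t⁻¹)⁻¹ * u ^ 2 := by group
    rw [h2]
    apply Commute.mul_right
    · exact (show Commute u _ from h1 u).inv_right
    · exact (Commute.refl u).pow_right 2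
  have hcx := aux x hx
  have hcy := aux y hy
  have hcz : Commute z t := by
    have h1 := Subgroup.mem_center_iff.1 (inv_mem hxz)
    have h2 := Subgroup.mem_center_iff.1 (inv_mem hyz)
    have e1 : z * x * z⁻¹ = ⁅x, z⁆⁻¹ * x := by simp only [commutatorElement_def]; group
    have e2 : z * y * z⁻¹ = ⁅y, z⁆⁻¹ * y := by simp only [commutatorElement_def]; group
    have e3 : z * t * z⁻¹ = ⁅z * x * z⁻¹, z * y * z⁻¹⁆ := by
      rw [ht]; simp only [commutatorElement_def]; group
    have e4 : z * t * z⁻¹ = t := by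
      rw [e3, e1, e2]
      generalize ⁅x, z⁆⁻¹ = r at *
      generalize ⁅y, z⁆⁻¹ = s at *
      have c1 : ∀ g : H, ⁅r * x, g⁆ = ⁅x, g⁆ := by
        intro g
        have : ⁅r * x, g⁆ = r * (x * g * x⁻¹) * r⁻¹ * g⁻¹ := by
          simp only [commutatorElement_def]; group
        rw [this, ← h1, mul_inv_cancel_right, commutatorElement_def]
      have c2 : ∀ g : H, ⁅g, s * y⁆ = ⁅g, y⁆ := by
        intro g
        have : ⁅g, s * y⁆ = (g * s) * (y * g⁻¹ * y⁻¹) * s⁻¹ := by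
          simp only [commutatorElement_def]; group
        rw [this, mul_assoc g, ← h2 (y * g⁻¹ * y⁻¹)]
        simp only [commutatorElement_def]; group
      rw [c1, c2]
    exact (mul_inv_eq_iff_eq_mul.1 e4)
  have htc : t ∈ Subgroup.center H := by
    rw [Subgroup.mem_center_iff]
    have : Subgroup.closure {x, y, z} ≤ Subgroup.centralizer {t} := by
      rw [Subgroup.closure_le]
      rintro g (rfl | rfl | rfl) <;> rw [SetLike.mem_coe, Subgroup.mem_centralizer_singleton_iff]
      · exact hcx.eq
      · exact hcy.eq
      · exact hcz.eq
    intro g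
    have hg := this (hcl ▸ Subgroup.mem_top g)
    rwa [Subgroup.mem_centralizer_singleton_iff] at hg
  have flip : ∀ a b : H, ⁅a, b⁆ ∈ Subgroup.center H → ⁅b, a⁆ ∈ Subgroup.center H := by
    intro a b h
    rw [← commutatorElement_inv]; exact inv_mem h
  have self : ∀ a : H, ⁅a, a⁆ ∈ Subgroup.center H := by
    intro a; rw [commutatorElement_self]; exact one_mem _
  apply aux_comm_le _ _ hcl
  rintro a (rfl | rfl | rfl) b (rfl | rfl | rfl)
  all_goals first | exact self _ | assumption | (apply flip; assumption)

theorem aux_card_two {K : Type*} [Group K] [Finite K] (T : Subgroup K) (h : Nat.card T ≤ 2) :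
    ∀ a ∈ T, ∀ b ∈ T, a ≠ 1 → b ≠ 1 → a = b := by
  intro a ha b hb ha1 hb1
  by_contra hab
  have : ({1, a, b} : Set K) ⊆ T := by
    rintro g (rfl | rfl | rfl)
    · exact one_mem _
    · exact ha
    · exact hb
  have h2 := Set.ncard_le_ncard this (Set.toFinite _)
  rw [Set.ncard_eq_three.2 ⟨1, a, b, ha1.symm, hb1.symm, hab, rfl⟩] at h2
  have : (T : Set K).ncard = Nat.card T := rfl
  omega

theorem aux_card_two_sq {K : Type*} [Group K] [Finite K] (T : Subgroup K) (h : Nat.card T ≤ 2) :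
    ∀ a ∈ T, a ^ 2 = 1 := by
  intro a ha
  by_contra h2
  have h1 : a ≠ 1 := by rintro rfl; simp at h2
  have := aux_card_two T h a ha (a ^ 2) (pow_mem ha 2) h1 h2
  rw [pow_two] at this
  exact h1 (by simpa using this.symm)


theorem aux_of_eq {K : Type*} [Group K] {g h : K} (hgh : Abelianization.of g = Abelianization.of h) :
    ∃ k ∈ commutator K, g = h * k := by
  refine ⟨h⁻¹ * g, ?_, by group⟩
  rw [← Abelianization.ker_of, MonoidHom.mem_ker, map_mul, map_inv, hgh, inv_mul_cancel]

theorem aux_of_one {K : Type*} [Group K] {g : K} :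
    Abelianization.of g = 1 ↔ g ∈ commutator K := by
  rw [← Abelianization.ker_of, MonoidHom.mem_ker]

theorem aux_of_surj {K : Type*} [Group K] (a : Abelianization K) : ∃ g, Abelianization.of g = a :=
  QuotientGroup.mk_surjective a

theorem aux_comm_mem {K : Type*} [Group K] (a b : K) : ⁅a, b⁆ ∈ commutator K :=
  Subgroup.commutator_mem_commutator (Subgroup.mem_top a) (Subgroup.mem_top b)

/-- The case of an automorphism of order 7. -/
theorem aux_K7 {K : Type*} [Group K] [Finite K] (hcent : commutator K ≤ Subgroup.center K)
    (hA : Nat.card (Abelianization K) = 8) (hK : Nat.card (commutator K) ≤ 2)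
    (φ : K →* K) (hφA : ∀ a, (Abelianization.map φ)^[7] a = a)
    (hsq : ∀ a : Abelianization K, a ^ 2 = 1)
    (hfix : ∀ a, Abelianization.map φ a = a → a = 1) : commutator K = ⊥ := by
  classical
  have hK2 := aux_card_two_sq _ hK
  have hsq' : ∀ g : K, g ^ 2 ∈ commutator K := fun g => by
    rw [← aux_of_one, map_pow, hsq]
  let T : Set (Abelianization K) := {a | ∃ g, Abelianization.of g = a ∧ g ^ 2 = 1}
  have h1T : (1 : Abelianization K) ∈ T := ⟨1, by simp, by simp⟩
  have hcard := aux_fix_card (Abelianization.map φ) (p := 7) (by norm_num) hφA T (by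
    rintro _ ⟨g, rfl, hg⟩
    exact ⟨φ g, by simp, by rw [← map_pow, hg, map_one]⟩)
  have h1 : Nat.card {x : Abelianization K // x ∈ T ∧ Abelianization.map φ x = x} = 1 := by
    rw [Nat.card_eq_one_iff_unique]
    refine ⟨⟨?_⟩, ⟨⟨1, h1T, map_one _⟩⟩⟩
    rintro ⟨a, -, ha⟩ ⟨b, -, hb⟩
    rw [Subtype.mk.injEq, hfix a ha, hfix b hb]
  rw [h1] at hcard
  by_cases hT : T = Set.univ
  · have hall : ∀ g : K, g ^ 2 = 1 := by
      intro g
      obtain ⟨h, hh, hh2⟩ : Abelianization.of g ∈ T := hT ▸ Set.mem_univ _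
      obtain ⟨k, hk, rfl⟩ := aux_of_eq hh.symm
      have hc : Commute h k := (Subgroup.mem_center_iff.1 (hcent hk) h)
      rw [hc.mul_pow, hh2, hK2 k hk, one_mul]
    rw [eq_bot_iff]
    apply aux_comm_le ⊥ Set.univ (Subgroup.closure_univ)
    intro a _ b _
    rw [Subgroup.mem_bot]
    have inv : ∀ g : K, g⁻¹ = g := fun g => by
      rw [inv_eq_iff_mul_eq_one, ← pow_two, hall]
    rw [commutatorElement_def, inv, inv, mul_assoc (a * b), ← pow_two, hall]
  · exfalso
    have hT1 : ∀ a ∈ T, a = 1 := by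
      have hlt : Nat.card T < 8 := by
        rw [← hA]
        exact Set.Finite.card_lt_card (t := Set.univ) (Set.toFinite _) 
          (Set.ssubset_univ_iff.2 hT) |>.trans_eq (by simp)
      have hone : Nat.card T = 1 := by
        unfold Nat.ModEq at hcard
        omega
      rw [Nat.card_eq_one_iff_unique] at hone
      intro a ha
      have := hone.1.elim ⟨a, ha⟩ ⟨1, h1T⟩
      exact congrArg Subtype.val this
    have hne : ∀ g : K, Abelianization.of g ≠ 1 → g ^ 2 ≠ 1 := fun g hg h2 => hg (hT1 _ ⟨g, rfl, h2⟩)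
    -- any two commuting independent elements give a contradiction
    have final : ∀ x y : K, Abelianization.of x ≠ 1 → Abelianization.of y ≠ 1 →
        Abelianization.of (x * y) ≠ 1 → ⁅x, y⁆ ≠ 1 := by
      intro x y hx hy hxy hcomm
      rw [commutatorElement_eq_one_iff_commute] at hcomm
      have e1 := aux_card_two _ hK _ (hsq' x) _ (hsq' y) (hne x hx) (hne y hy)
      have e2 := hne _ hxy
      rw [hcomm.mul_pow, e1, ← pow_two, hK2 _ (hsq' y)] at e2
      exact e2 rfl
    have pick : ∀ s : Finset (Abelianization K), s.card < 8 → ∃ a, a ∉ s := by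
      intro s hs
      have := Fintype.ofFinite (Abelianization K)
      rw [Nat.card_eq_fintype_card] at hA
      by_contra hcon
      push Not at hcon
      have : s = Finset.univ := Finset.eq_univ_iff_forall.2 hcon
      rw [this, Finset.card_univ] at hs
      omega
    have inv : ∀ g : Abelianization K, g⁻¹ = g := fun g => by
      rw [inv_eq_iff_mul_eq_one, ← pow_two, hsq]
    have eqone : ∀ g h : Abelianization K, g * h = 1 → h = g := fun g h e => by
      rw [← inv g]; exact (inv_eq_of_mul_eq_one_right e).symm
    obtain ⟨a, ha⟩ := pick {1} (by simp)
    obtain ⟨b, hb⟩ := pick {1, a} (Finset.card_le_two.trans_lt (by norm_num))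
    obtain ⟨c, hc⟩ := pick {1, a, b, a * b} (Finset.card_le_four.trans_lt (by norm_num))
    simp only [Finset.mem_insert, Finset.mem_singleton, not_or] at ha hb hc
    obtain ⟨x, rfl⟩ := aux_of_surj a
    obtain ⟨y, rfl⟩ := aux_of_surj b
    obtain ⟨z, rfl⟩ := aux_of_surj c
    have n1 := final x y ha hb.1 (by rw [map_mul]; exact fun e => hb.2 (eqone _ _ e))
    have n2 := final x z ha hc.1 (by rw [map_mul]; exact fun e => hc.2.1 (eqone _ _ e))
    have n3 := final x (y * z) ha (by rw [map_mul]; exact fun e => hc.2.2.1 (eqone _ _ e))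
      (by rw [← mul_assoc, map_mul, map_mul _ x]; exact fun e => hc.2.2.2 (eqone _ _ e))
    rw [aux_comm_mul_right _ _ _ (hcent (aux_comm_mem _ _)), 
      aux_card_two _ hK _ (aux_comm_mem _ _) _ (aux_comm_mem _ _) n1 n2, ← pow_two] at n3
    exact n3 (hK2 _ (aux_comm_mem _ _))

theorem aux_iterate_map {K L : Type*} (f : K → K) (g : L → L) (q : K → L) 
    (h : ∀ x, g (q x) = q (f x)) (n : ℕ) (x : K) : g^[n] (q x) = q (f^[n] x) := by
  induction n generalizing x with
  | zero => rfl
  | succ n ih => rw [Function.iterate_succ_apply, Function.iterate_succ_apply, h, ih]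

theorem aux_K {K : Type*} [Group K] [Finite K] (hcent : commutator K ≤ Subgroup.center K)
    {m p : ℕ} (hA : Nat.card (Abelianization K) = 2 ^ m) (hm : m ≤ 3)
    (hK : m = 3 → Nat.card (commutator K) ≤ 2) (hp : p.Prime) (hp2 : p ≠ 2)
    (φ : K →* K) (hφ : ∀ a, φ^[p] a = a)
    (hne : ∃ g, Abelianization.of (φ g) ≠ Abelianization.of g) :
    commutator K = ⊥ ∨ ∃ x y z : K, Subgroup.closure {x, y, z} ⊔ commutator K = ⊤ ∧
      ⁅x, z⁆ = 1 ∧ ⁅y, z⁆ = 1 ∧ x ^ 2 = ⁅x, y⁆ ∧ y ^ 2 = ⁅x, y⁆ ∧ (z ^ 2 = 1 ∨ z ^ 2 = ⁅x, y⁆) := by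
  classical
  have hφA : ∀ a, (Abelianization.map φ)^[p] a = a := by
    intro a
    obtain ⟨g, rfl⟩ := aux_of_surj a
    rw [aux_iterate_map φ _ _ (fun x => Abelianization.map_of φ x), hφ]
  have hinj : Function.Injective φ := by
    intro a b hab
    obtain ⟨r, hr⟩ : ∃ r, p = r + 1 := ⟨p - 1, by have := hp.pos; omega⟩
    rw [← hφ a, ← hφ b, hr, Function.iterate_succ_apply, Function.iterate_succ_apply, hab]
  have hφK : ∀ k ∈ commutator K, φ k ∈ commutator K := by
    intro k hk
    rw [← aux_of_one] at hk ⊢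
    rw [← Abelianization.map_of, hk, map_one]
  obtain ⟨hsq, hcase⟩ := aux_abelian hA hm hp hp2 (Abelianization.map φ) hφA (by
    obtain ⟨g, hg⟩ := hne
    exact ⟨Abelianization.of g, by simpa using hg⟩)
  rcases hcase with ⟨xb, zb, hz1, h3, hzfix, hgen, hprod⟩ | ⟨rfl, rfl, hfix⟩
  swap
  · left
    exact aux_K7 hcent (by simpa using hA) (hK rfl) φ hφA hsq hfix
  have cen : ∀ k ∈ commutator K, ∀ g, g * k = k * g := fun k hk => Subgroup.mem_center_iff.1 (hcent hk)
  have bl : ∀ a b c : K, ⁅a * b, c⁆ = ⁅a, c⁆ * ⁅b, c⁆ := fun a b c =>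
    aux_comm_mul_left a b c (hcent (aux_comm_mem _ _))
  have br : ∀ a b c : K, ⁅a, b * c⁆ = ⁅a, b⁆ * ⁅a, c⁆ := fun a b c =>
    aux_comm_mul_right a b c (hcent (aux_comm_mem _ _))
  have ccl : ∀ k ∈ commutator K, ∀ g : K, ⁅k, g⁆ = 1 := fun k hk g => by
    rw [commutatorElement_eq_one_iff_mul_comm, cen k hk]
  have ccr : ∀ k ∈ commutator K, ∀ g : K, ⁅g, k⁆ = 1 := fun k hk g => by
    rw [commutatorElement_eq_one_iff_mul_comm, cen k hk]
  have il : ∀ a c : K, ⁅a⁻¹, c⁆ = ⁅a, c⁆⁻¹ := fun a c => by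
    rw [eq_inv_iff_mul_eq_one, ← bl]; simp
  have ir : ∀ a c : K, ⁅c, a⁻¹⁆ = ⁅c, a⁆⁻¹ := fun a c => by
    rw [eq_inv_iff_mul_eq_one, ← br]; simp
  have hsq' : ∀ g : K, g ^ 2 ∈ commutator K := fun g => by
    rw [← aux_of_one, map_pow, hsq]
  obtain ⟨x, rfl⟩ := aux_of_surj xb
  obtain ⟨z, rfl, hz1'⟩ : ∃ z : K, Abelianization.of z = zb ∧ (z = 1 ∨ m = 3) := by
    rcases hz1 with rfl | h
    · exact ⟨1, map_one _, Or.inl rfl⟩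
    · obtain ⟨z, hz⟩ := aux_of_surj zb
      exact ⟨z, hz, Or.inr h⟩
  simp only [Abelianization.map_of] at h3 hzfix hgen hprod
  set y := φ x with hy
  set w := φ y with hw
  obtain ⟨k0, hk0, hwx⟩ := aux_of_eq h3
  obtain ⟨k1, hk1, hzk⟩ := aux_of_eq hzfix
  obtain ⟨k2, hk2, hwk⟩ : ∃ k ∈ commutator K, w = (x * y)⁻¹ * k := by
    apply aux_of_eq
    rw [map_inv, map_mul, eq_comm]
    exact inv_eq_of_mul_eq_one_right hprod
  have hgenK : Subgroup.closure {x, y, z} ⊔ commutator K = ⊤ := by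
    rw [← Abelianization.ker_of]
    rw [← Subgroup.comap_map_eq, MonoidHom.map_closure]
    rw [show (Abelianization.of '' {x, y, z}) = {Abelianization.of x, Abelianization.of y, Abelianization.of z} by
      simp [Set.image_insert_eq]]
    rw [hgen, Subgroup.comap_top]
  have hcom : ∀ T : Subgroup K, T ≤ Subgroup.center K → ⁅x, y⁆ ∈ T → ⁅x, z⁆ ∈ T → ⁅y, z⁆ ∈ T → commutator K ≤ T := by
    intro T hT h1 h2 h3
    have hn : T.Normal := ⟨fun n hn g => by
      rw [Subgroup.mem_center_iff.1 (hT hn) g, mul_inv_cancel_right]; exact hn⟩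
    apply aux_comm_le T ({x, y, z} ∪ (commutator K : Set K))
    · rw [Subgroup.closure_union, Subgroup.closure_eq, hgenK]
    · have flip : ∀ a b : K, ⁅a, b⁆ ∈ T → ⁅b, a⁆ ∈ T := by
        intro a b h
        rw [← commutatorElement_inv]; exact inv_mem h
      have self : ∀ a : K, ⁅a, a⁆ ∈ T := by
        intro a; rw [commutatorElement_self]; exact one_mem _
      rintro a (ha | ha) b (hb | hb)
      · rcases ha with rfl | rfl | rfl <;> rcases hb with rfl | rfl | rfl
        all_goals first | exact self _ | assumption | (apply flip; assumption)
      · rw [ccr b hb]; exact one_mem _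
      · rw [ccl a ha]; exact one_mem _
      · rw [ccl a ha]; exact one_mem _
  set t := ⁅x, y⁆ with ht
  have htK : t ∈ commutator K := aux_comm_mem _ _
  have ht2 : t ^ 2 = 1 := by
    rw [pow_two, ht, ← bl, ← pow_two, ccl _ (hsq' x)]
  have htfix : φ t = t := by
    rw [ht, map_commutatorElement, ← hy, ← hw, hwk, br, ccr k2 hk2, mul_one, ir, br,
      commutatorElement_self, mul_one, commutatorElement_inv]
  have hboth : (∀ k ∈ commutator K, φ k = k) ∧ (∀ k ∈ commutator K, k ^ 2 = 1) := by
    rcases hz1' with rfl | hm3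
    · have hle : commutator K ≤ Subgroup.zpowers t := by
        apply hcom
        · rw [Subgroup.zpowers_le]; exact hcent htK
        · exact Subgroup.mem_zpowers t
        · rw [commutatorElement_one_right]; exact one_mem _
        · rw [commutatorElement_one_right]; exact one_mem _
      constructor
      · intro k hk
        obtain ⟨i, rfl⟩ := Subgroup.mem_zpowers_iff.1 (hle hk)
        rw [map_zpow, htfix]
      · intro k hk
        obtain ⟨i, rfl⟩ := Subgroup.mem_zpowers_iff.1 (hle hk)
        rw [← zpow_natCast, zpow_comm, zpow_natCast, ht2, one_zpow]
    · have hc := hK hm3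
      refine ⟨?_, aux_card_two_sq _ hc⟩
      intro k hk
      by_cases hk1 : k = 1
      · rw [hk1, map_one]
      · apply aux_card_two _ hc _ (hφK k hk) _ hk _ hk1
        intro h
        exact hk1 (hinj (h.trans (map_one φ).symm))
  obtain ⟨hfixK, hK2⟩ := hboth
  -- squares
  have hy2 : y ^ 2 = x ^ 2 := by rw [hy, ← map_pow, hfixK _ (hsq' x)]
  have hw2 : w ^ 2 = x ^ 2 := by rw [hw, ← map_pow, hfixK _ (hsq' y), hy2]
  have hxt : x ^ 2 = t := by
    have c : Commute (x * y)⁻¹ k2 := cen k2 hk2 _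
    have e1 : x ^ 2 = ((x * y) ^ 2)⁻¹ := by
      rw [← hw2, hwk, c.mul_pow, hK2 k2 hk2, mul_one, inv_pow]
    have e2 : (x * y) ^ 2 = t * (y * x ^ 2 * y) := by
      rw [ht, commutatorElement_def]; simp only [pow_two]; group
    rw [cen _ (hsq' x), mul_assoc, ← pow_two, hy2, ← pow_two, hK2 _ (hsq' x), mul_one] at e2
    rw [e1, e2, inv_eq_iff_mul_eq_one, ← pow_two, ht2]
  have hs1 : ⁅y, z⁆ = ⁅x, z⁆ := by
    rw [← hfixK _ (aux_comm_mem x z), map_commutatorElement, hzk, br, ccr k1 hk1, mul_one]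
  have hs2 : ⁅w, z⁆ = ⁅x, z⁆ := by
    rw [← hs1, ← hfixK _ (aux_comm_mem y z), map_commutatorElement, hzk, br, ccr k1 hk1, mul_one]
  have hsz : ⁅x, z⁆ = 1 := by
    rw [← hs2, hwk, bl, ccl k2 hk2, mul_one, il, bl, hs1, ← pow_two, hK2 _ (aux_comm_mem x z), inv_one]
  by_cases ht1 : t = 1
  · left
    rw [eq_bot_iff]
    apply hcom ⊥ bot_le
    · exact ht1
    · exact hsz
    · exact hs1.trans hsz
  · right
    refine ⟨x, y, z, hgenK, hsz, hs1.trans hsz, hxt, hy2.trans hxt, ?_⟩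
    rcases hz1' with rfl | hm3
    · left; simp
    · by_cases hz : z ^ 2 = 1
      · exact Or.inl hz
      · exact Or.inr (aux_card_two _ (hK hm3) _ (hsq' z) _ htK hz ht1)


theorem aux_lcs_step {G : Type*} [Group G] [Group.IsNilpotent G] (i : ℕ)
    (h : (⊤ : Subgroup G).lowerCentralSeries i ≤ (⊤ : Subgroup G).lowerCentralSeries (i + 1)) :
    (⊤ : Subgroup G).lowerCentralSeries i = ⊥ := by
  have h1 : ∀ k, (⊤ : Subgroup G).lowerCentralSeries i ≤ (⊤ : Subgroup G).lowerCentralSeries (i + k) := by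
    intro k
    induction k with
    | zero => exact le_rfl
    | succ k ih =>
      refine h.trans ?_
      rw [← add_assoc, Subgroup.lowerCentralSeries_succ, Subgroup.lowerCentralSeries_succ]
      exact Subgroup.commutator_mono ih le_rfl
  obtain ⟨c, hc⟩ := Subgroup.nilpotent_iff_lowerCentralSeries.1 (inferInstance : Group.IsNilpotent G)
  rw [eq_bot_iff, ← hc]
  exact (h1 c).trans (Subgroup.lowerCentralSeries_antitone _ (by omega))

theorem aux_gen {G : Type*} [Group G] [Finite G] [Group.IsNilpotent G] (S : Subgroup G)
    (h : S ⊔ commutator G = ⊤) : S = ⊤ := by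
  by_contra hS
  obtain ⟨M, hM, hSM⟩ := (eq_top_or_exists_le_coatom S).resolve_left hS
  have h02 : Group.IsNilpotent G ↔ ∀ H : Subgroup G, IsCoatom H → H.Normal :=
    Group.isNilpotent_of_finite_tfae.out 0 2
  have hn : M.Normal := h02.1 inferInstance M hM
  have h1 : M ⊔ commutator G = ⊤ := by
    rw [eq_top_iff, ← h]
    exact sup_le_sup_right hSM _
  have h2 : commutator (G ⧸ M) = ⊤ := by
    have h3 := congrArg (Subgroup.map (QuotientGroup.mk' M)) h1
    rw [Subgroup.map_sup, QuotientGroup.map_mk'_self, bot_sup_eq, commutator_def,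
      Subgroup.map_commutator, Subgroup.map_top_of_surjective _ (QuotientGroup.mk'_surjective M)] at h3
    exact h3
  have h4 := aux_lcs_step (G := G ⧸ M) 0 (by
    rw [zero_add, Subgroup.top_lowerCentralSeries_one, h2]; exact le_top)
  rw [Subgroup.lowerCentralSeries_zero] at h4
  apply hM.1
  rw [eq_top_iff]
  intro g _
  have h5 : (QuotientGroup.mk' M g) ∈ (⊤ : Subgroup (G ⧸ M)) := Subgroup.mem_top _
  rw [h4, Subgroup.mem_bot] at h5
  exact (QuotientGroup.eq_one_iff g).1 h5

theorem aux_nontriv {G : Type*} [Group G] [Finite G] [Group.IsNilpotent G] {n p : ℕ}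
    (hG : Nat.card G = 2 ^ n) (hp : p.Prime) (hp2 : p ≠ 2) (φ : G →* G) (hφ : ∀ a, φ^[p] a = a)
    (hne : ∃ a, φ a ≠ a) : ∃ g, Abelianization.of (φ g) ≠ Abelianization.of g := by
  by_contra hcon
  push Not at hcon
  let Fix : Subgroup G := 
    { carrier := {a | φ a = a}
      one_mem' := map_one φ
      mul_mem' := by intro a b ha hb; simp_all
      inv_mem' := by intro a ha; simp_all }
  have : Fix = ⊤ := by
    apply aux_gen
    rw [eq_top_iff]
    intro g _
    let S : Set G := {h | Abelianization.of h = Abelianization.of g}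
    have h1 := aux_fix_card φ hp hφ S (fun x hx => (hcon x).trans hx)
    have h2 : Nat.card S = Nat.card (commutator G) := by
      refine Nat.card_congr ⟨fun x => ⟨g⁻¹ * x.1, ?_⟩, fun k => ⟨g * k.1, ?_⟩, ?_, ?_⟩
      · rw [← aux_of_one, map_mul, map_inv, x.2, inv_mul_cancel]
      · have := aux_of_one.2 k.2
        change Abelianization.of (g * k.1) = _
        rw [map_mul, this, mul_one]
      · intro x; simp
      · intro x; simp
    have h3 : Nat.card {x : G // x ∈ S ∧ φ x = x} ≠ 0 := by
      intro h0
      rw [h0, h2, Nat.modEq_zero_iff_dvd] at h1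
      have h4 := h1.trans (Subgroup.card_subgroup_dvd_card (commutator G))
      rw [hG] at h4
      exact hp2 ((Nat.prime_dvd_prime_iff_eq hp Nat.prime_two).1 (hp.dvd_of_dvd_pow h4))
    obtain ⟨⟨u, huS, hu⟩⟩ := (Nat.card_ne_zero.1 h3).1
    obtain ⟨k, hk, rfl⟩ := aux_of_eq (show Abelianization.of u = Abelianization.of g from huS)
    rw [← mul_inv_cancel_right g k]
    exact mul_mem (Subgroup.mem_sup_left hu) (Subgroup.mem_sup_right (inv_mem hk))
  obtain ⟨a, ha⟩ := hne
  apply ha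
  have : a ∈ Fix := this ▸ Subgroup.mem_top a
  exact this

theorem aux_lcs_card {G : Type*} [Group G] [Finite G] [Group.IsNilpotent G] (c : ℕ)
    (hc : Group.nilpotencyClass G = c) (j : ℕ) (hj : j ≤ c) :
    2 ^ j ≤ Nat.card ((⊤ : Subgroup G).lowerCentralSeries (c - j)) := by
  induction j with
  | zero => rw [pow_zero]; exact Nat.card_pos
  | succ j ih =>
    have ih := ih (by omega)
    have hcj : c - j = c - (j + 1) + 1 := by omega
    rw [hcj] at ih
    set i := c - (j + 1) with hi
    have hle : (⊤ : Subgroup G).lowerCentralSeries (i + 1) ≤ (⊤ : Subgroup G).lowerCentralSeries i :=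
      Subgroup.lowerCentralSeries_antitone _ (by omega)
    have hne : (⊤ : Subgroup G).lowerCentralSeries (i + 1) ≠ (⊤ : Subgroup G).lowerCentralSeries i := by
      intro h
      have := aux_lcs_step i h.ge
      rw [Subgroup.lowerCentralSeries_eq_bot_iff_nilpotencyClass_le] at this
      omega
    have hdvd := Subgroup.card_dvd_of_le hle
    obtain ⟨r, hr⟩ := hdvd
    have hpos : 0 < Nat.card ((⊤ : Subgroup G).lowerCentralSeries i) := Nat.card_pos
    have hr2 : 2 ≤ r := by
      by_contra hcon
      have : r = 0 ∨ r = 1 := by omega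
      rcases this with rfl | rfl
      · omega
      · apply hne
        apply Subgroup.eq_of_le_of_card_ge hle
        omega
    rw [hr, pow_succ]
    exact Nat.mul_le_mul ih hr2


theorem aux_lcs_map {G : Type*} [Group G] (φ : G →* G) (i : ℕ) :
    (⊤ : Subgroup G).lowerCentralSeries i ≤ ((⊤ : Subgroup G).lowerCentralSeries i).comap φ := by
  rw [← Subgroup.map_le_iff_le_comap, Subgroup.map_lowerCentralSeries]
  exact Subgroup.lowerCentralSeries_mono i le_top

theorem aux_mem_center {G : Type*} [Group G] (i : ℕ) (g : G)
    (hg : g ∈ (⊤ : Subgroup G).lowerCentralSeries i) :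
    QuotientGroup.mk' ((⊤ : Subgroup G).lowerCentralSeries (i + 1)) g ∈
      Subgroup.center (G ⧸ (⊤ : Subgroup G).lowerCentralSeries (i + 1)) := by
  rw [Subgroup.mem_center_iff]
  intro q
  obtain ⟨h, rfl⟩ := QuotientGroup.mk'_surjective _ q
  have h1 : ⁅g, h⁆ ∈ (⊤ : Subgroup G).lowerCentralSeries (i + 1) := by
    rw [Subgroup.lowerCentralSeries_succ]
    exact Subgroup.commutator_mem_commutator hg (Subgroup.mem_top h)
  rw [← QuotientGroup.eq_one_iff] at h1
  have h2 : ⁅QuotientGroup.mk' ((⊤ : Subgroup G).lowerCentralSeries (i + 1)) g,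
      QuotientGroup.mk' ((⊤ : Subgroup G).lowerCentralSeries (i + 1)) h⁆ = 1 := by
    rw [← map_commutatorElement]; exact h1
  exact (commutatorElement_eq_one_iff_mul_comm.1 h2).symm

theorem aux_commutator_quot {G : Type*} [Group G] (N : Subgroup G) [N.Normal] :
    commutator (G ⧸ N) = (commutator G).map (QuotientGroup.mk' N) := by
  rw [commutator_def, commutator_def, Subgroup.map_commutator,
    Subgroup.map_top_of_surjective _ (QuotientGroup.mk'_surjective N)]

theorem aux_structure {G : Type*} [Group G] [Finite G] [Group.IsNilpotent G] {n p : ℕ}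
    (hn : 4 ≤ n) (hG : Nat.card G = 2 ^ n) (hclass : Group.nilpotencyClass G = n - 2)
    (hp : p.Prime) (hp2 : p ≠ 2) (φ : G →* G) (hφ : ∀ a, φ^[p] a = a) (hne : ∃ a, φ a ≠ a) :
    n = 4 ∧ commutator G ≤ Subgroup.center G ∧ ∃ x y z : G, Subgroup.closure {x, y, z} = ⊤ ∧
      ⁅x, z⁆ = 1 ∧ ⁅y, z⁆ = 1 ∧ x ^ 2 = ⁅x, y⁆ ∧ y ^ 2 = ⁅x, y⁆ ∧ (z ^ 2 = 1 ∨ z ^ 2 = ⁅x, y⁆) := by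
  obtain ⟨g0, hg0⟩ := aux_nontriv hG hp hp2 φ hφ hne
  set N := (⊤ : Subgroup G).lowerCentralSeries 2 with hN
  have hNle : N ≤ commutator G := by
    rw [← Subgroup.top_lowerCentralSeries_one]
    exact Subgroup.lowerCentralSeries_antitone _ (by norm_num)
  have hcomap : (commutator (G ⧸ N)).comap (QuotientGroup.mk' N) = commutator G := by
    rw [aux_commutator_quot, Subgroup.comap_map_eq, QuotientGroup.ker_mk', sup_eq_left.2 hNle]
  have hcent : commutator (G ⧸ N) ≤ Subgroup.center (G ⧸ N) := by
    rw [aux_commutator_quot, Subgroup.map_le_iff_le_comap]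
    intro g hg
    exact aux_mem_center 1 g (by rwa [Subgroup.top_lowerCentralSeries_one])
  have hidx : (commutator (G ⧸ N)).index = (commutator G).index := by
    rw [← hcomap, Subgroup.index_comap_of_surjective _ (QuotientGroup.mk'_surjective N)]
  have hc1 := aux_lcs_card (n - 2) hclass (n - 3) (by omega)
  have hc2 := aux_lcs_card (n - 2) hclass (n - 4) (by omega)
  rw [show n - 2 - (n - 3) = 1 by omega, Subgroup.top_lowerCentralSeries_one] at hc1
  rw [show n - 2 - (n - 4) = 2 by omega, ← hN] at hc2
  have hi1 : (commutator G).index ≤ 8 := by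
    have h := (commutator G).card_mul_index
    have e : 2 ^ n = 2 ^ (n - 3) * 8 := by
      rw [show (8 : ℕ) = 2 ^ 3 by norm_num, ← pow_add]; congr 1; omega
    rw [hG, e] at h
    by_contra hcon
    have := Nat.mul_lt_mul_of_le_of_lt hc1 (not_le.1 hcon) Nat.card_pos
    omega
  have hi2 : Nat.card (G ⧸ N) ≤ 16 := by
    have h := N.card_mul_index
    have e : 2 ^ n = 2 ^ (n - 4) * 16 := by
      rw [show (16 : ℕ) = 2 ^ 4 by norm_num, ← pow_add]; congr 1; omega
    rw [hG, e] at h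
    by_contra hcon
    have := Nat.mul_lt_mul_of_le_of_lt hc2 (not_le.1 hcon) Nat.card_pos
    change _ < Nat.card N * N.index at this
    omega
  obtain ⟨m, -, hm⟩ := (Nat.dvd_prime_pow Nat.prime_two).1 (hG ▸ (commutator G).index_dvd_card)
  have hm3 : m ≤ 3 := by
    rw [hm] at hi1
    by_contra hcon
    have : 2 ^ 4 ≤ 2 ^ m := Nat.pow_le_pow_right (by norm_num) (by omega)
    omega
  let ψ : G ⧸ N →* G ⧸ N := QuotientGroup.map N N φ (aux_lcs_map φ 2)
  have hψ : ∀ g, ψ (QuotientGroup.mk' N g) = QuotientGroup.mk' N (φ g) := fun g => rfl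
  have hK := aux_K (K := G ⧸ N) hcent (m := m) (p := p) (by rw [← hm, ← hidx]; rfl) hm3 (by
      rintro rfl
      have h := (commutator (G ⧸ N)).card_mul_index
      rw [hidx, hm] at h
      omega) hp hp2 ψ (by
      intro a
      obtain ⟨g, rfl⟩ := QuotientGroup.mk'_surjective N a
      rw [aux_iterate_map φ _ _ hψ, hφ]) (by
      refine ⟨QuotientGroup.mk' N g0, ?_⟩
      rw [hψ]
      intro h
      apply hg0
      have h1 : (QuotientGroup.mk' N g0)⁻¹ * QuotientGroup.mk' N (φ g0) ∈ commutator (G ⧸ N) := by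
        rw [← aux_of_one, map_mul, map_inv, h, inv_mul_cancel]
      rw [← map_inv, ← map_mul, ← Subgroup.mem_comap, hcomap, ← aux_of_one, map_mul, map_inv] at h1
      exact (inv_mul_eq_one.1 h1).symm)
  rcases hK with hbot | ⟨xb, yb, zb, hgen, hxz, hyz, hx, hy, hz⟩
  · exfalso
    rw [hbot, MonoidHom.comap_bot, QuotientGroup.ker_mk'] at hcomap
    have := aux_lcs_step (G := G) 1 (by rw [Subgroup.top_lowerCentralSeries_one, ← hcomap])
    rw [Subgroup.lowerCentralSeries_eq_bot_iff_nilpotencyClass_le] at this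
    omega
  obtain ⟨x, rfl⟩ := QuotientGroup.mk'_surjective N xb
  obtain ⟨y, rfl⟩ := QuotientGroup.mk'_surjective N yb
  obtain ⟨z, rfl⟩ := QuotientGroup.mk'_surjective N zb
  have mem : ∀ g, QuotientGroup.mk' N g = 1 ↔ g ∈ N := fun g => QuotientGroup.eq_one_iff g
  rw [← map_commutatorElement, mem] at hxz hyz
  rw [← map_commutatorElement, ← map_pow, ← mul_inv_eq_one, ← map_inv, ← map_mul, mem] at hx hy
  rw [← map_commutatorElement, ← map_pow, ← mul_inv_eq_one (b := QuotientGroup.mk' N ⁅x, y⁆),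
    ← map_inv, ← map_mul, mem, mem] at hz
  have hgenG : Subgroup.closure {x, y, z} = ⊤ := by
    apply aux_gen
    have h1 := congrArg (Subgroup.comap (QuotientGroup.mk' N)) hgen
    rw [Subgroup.comap_top] at h1
    rw [← h1, aux_commutator_quot,
      show ({QuotientGroup.mk' N x, QuotientGroup.mk' N y, QuotientGroup.mk' N z} : Set (G ⧸ N)) =
        QuotientGroup.mk' N '' {x, y, z} by simp [Set.image_insert_eq],
      ← MonoidHom.map_closure, ← Subgroup.map_sup, Subgroup.comap_map_eq, QuotientGroup.ker_mk',
      sup_assoc, sup_eq_left.2 hNle]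
  have hNbot : N = ⊥ := by
    apply aux_lcs_step
    set M := (⊤ : Subgroup G).lowerCentralSeries (2 + 1) with hM
    have cm : ∀ g ∈ N, QuotientGroup.mk' M g ∈ Subgroup.center (G ⧸ M) := fun g hg =>
      aux_mem_center 2 g hg
    have hB := aux_B (QuotientGroup.mk' M x) (QuotientGroup.mk' M y) (QuotientGroup.mk' M z)
      (by
        have := congrArg (Subgroup.map (QuotientGroup.mk' M)) hgenG
        rw [MonoidHom.map_closure, Subgroup.map_top_of_surjective _ (QuotientGroup.mk'_surjective M)] at this
        rw [← this]; simp [Set.image_insert_eq])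
      (by rw [← map_commutatorElement]; exact cm _ hxz)
      (by rw [← map_commutatorElement]; exact cm _ hyz)
      (by rw [← map_commutatorElement, ← map_pow, ← map_inv, ← map_mul]; exact cm _ hx)
      (by rw [← map_commutatorElement, ← map_pow, ← map_inv, ← map_mul]; exact cm _ hy)
    rw [Subgroup.lowerCentralSeries_succ, Subgroup.commutator_le, Subgroup.top_lowerCentralSeries_one]
    intro g hg h _
    have h1 : QuotientGroup.mk' M g ∈ commutator (G ⧸ M) := by
      rw [aux_commutator_quot]; exact Subgroup.mem_map_of_mem _ hg
    have h2 := Subgroup.mem_center_iff.1 (hB h1) (QuotientGroup.mk' M h)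
    have h3 := commutatorElement_eq_one_iff_mul_comm.2 h2.symm
    rw [← map_commutatorElement] at h3
    exact (QuotientGroup.eq_one_iff _).1 h3
  have hcl := hNbot
  rw [hN, Subgroup.lowerCentralSeries_eq_bot_iff_nilpotencyClass_le] at hcl
  rw [hNbot, Subgroup.mem_bot] at hxz hyz hx hy
  rw [hNbot, Subgroup.mem_bot, Subgroup.mem_bot, mul_inv_eq_one] at hz
  rw [mul_inv_eq_one] at hx hy
  refine ⟨by omega, ?_, x, y, z, hgenG, hxz, hyz, hx, hy, hz⟩
  intro g hg
  rw [Subgroup.mem_center_iff]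
  intro h
  have h1 : ⁅g, h⁆ ∈ N := by
    rw [hN, Subgroup.lowerCentralSeries_succ, Subgroup.top_lowerCentralSeries_one]
    exact Subgroup.commutator_mem_commutator hg (Subgroup.mem_top h)
  rw [hNbot, Subgroup.mem_bot, commutatorElement_eq_one_iff_mul_comm] at h1
  exact h1.symm


theorem aux_pow_val {G : Type*} [Group G] {k : ℕ} [NeZero k] {x : G} (hx : x ^ k = 1) (i j : ZMod k) :
    x ^ (i + j).val = x ^ i.val * x ^ j.val := by
  rw [ZMod.val_add, ← pow_eq_pow_mod _ hx, pow_add]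

theorem aux_pow_val_neg {G : Type*} [Group G] {k : ℕ} [NeZero k] {x : G} (hx : x ^ k = 1) (i : ZMod k) :
    x ^ (-i).val = (x ^ i.val)⁻¹ := by
  rw [eq_inv_iff_mul_eq_one, ← aux_pow_val hx, neg_add_cancel, ZMod.val_zero, pow_zero]

/-- Homomorphisms out of the quaternion group of order 8. -/
def auxQHom {G : Type*} [Group G] (x y : G) (hx : x ^ 4 = 1) (hy : y ^ 2 = x ^ 2)
    (hxy : x * y = y * x⁻¹) : QuaternionGroup 2 →* G where
  toFun q := match q with
    | QuaternionGroup.a i => x ^ (ZMod.val (n := 4) i)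
    | QuaternionGroup.xa i => y * x ^ (ZMod.val (n := 4) i)
  map_one' := by
    change x ^ (ZMod.val (n := 4) 0) = 1
    simp
  map_mul' := by
    have hsc : ∀ k : ℕ, x ^ k * y = y * (x ^ k)⁻¹ := by
      intro k
      have h : SemiconjBy y x⁻¹ x := hxy.symm
      have := h.pow_right k
      rw [inv_pow] at this
      exact this.symm
    rintro (i | i) (j | j)
    · exact aux_pow_val (k := 4) hx i j
    · change y * x ^ (ZMod.val (n := 4) (j - i)) = x ^ (ZMod.val (n := 4) i) * (y * x ^ (ZMod.val (n := 4) j))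
      rw [← mul_assoc, hsc, mul_assoc, sub_eq_neg_add, aux_pow_val (k := 4) hx, aux_pow_val_neg (k := 4) hx]
    · change y * x ^ (ZMod.val (n := 4) (i + j)) = y * x ^ (ZMod.val (n := 4) i) * x ^ (ZMod.val (n := 4) j)
      rw [mul_assoc, aux_pow_val (k := 4) hx]
    · change x ^ (ZMod.val (n := 4) (2 + j - i)) = y * x ^ (ZMod.val (n := 4) i) * (y * x ^ (ZMod.val (n := 4) j))
      rw [show (2 + j - i : ZMod 4) = 2 + (-i + j) by ring, aux_pow_val (k := 4) hx, aux_pow_val (k := 4) hx,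
        aux_pow_val_neg (k := 4) hx, mul_assoc y, ← mul_assoc _ y, hsc, mul_assoc y, ← mul_assoc y y, ← pow_two, hy]
      rfl

/-- Homomorphisms out of the cyclic group of order 2. -/
def auxCHom {G : Type*} [Group G] (z : G) (hz : z ^ 2 = 1) : Multiplicative (ZMod 2) →* G where
  toFun i := z ^ (Multiplicative.toAdd i).val
  map_one' := by simp
  map_mul' i j := aux_pow_val (k := 2) hz _ _

theorem aux_iso_Q {G : Type*} [Group G] [Finite G] (hG : Nat.card G = 16) (x y z : G)
    (hgen : Subgroup.closure {x, y, z} = ⊤) (hx : x ^ 4 = 1) (hy : y ^ 2 = x ^ 2)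
    (hxy : x * y = y * x⁻¹) (hz : z ^ 2 = 1) (hxz : Commute x z) (hyz : Commute y z) :
    Nonempty (G ≃* (QuaternionGroup 2 × Multiplicative (ZMod 2))) := by
  let f : QuaternionGroup 2 × Multiplicative (ZMod 2) →* G :=
    MonoidHom.noncommCoprod (auxQHom x y hx hy hxy) (auxCHom z hz) (by
      rintro (i | i) j
      · exact hxz.pow_pow _ _
      · exact Commute.mul_left (hyz.pow_right _) (hxz.pow_pow _ _))
  have hf : Function.Surjective f := by
    rw [← MonoidHom.range_eq_top, eq_top_iff, ← hgen, Subgroup.closure_le]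
    rintro g (rfl | rfl | rfl)
    · refine ⟨(QuaternionGroup.a 1, 1), ?_⟩
      change g ^ 1 * z ^ 0 = g
      simp
    · refine ⟨(QuaternionGroup.xa 0, 1), ?_⟩
      change g * x ^ 0 * z ^ 0 = g
      simp
    · refine ⟨(1, Multiplicative.ofAdd 1), ?_⟩
      change x ^ 0 * g ^ 1 = g
      simp
  have hb : Function.Bijective f := by
    apply Function.Surjective.bijective_of_nat_card_le hf
    rw [hG, Nat.card_prod, Nat.card_eq_fintype_card, QuaternionGroup.card]
    simp
  exact ⟨(MulEquiv.ofBijective f hb).symm⟩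

/-- Homomorphisms out of `PGroup16`. -/
theorem auxP_hom {G : Type*} [Group G] (a b c : G) (ha : a ^ 4 = 1) (hb : b ^ 2 = 1) (hc : c ^ 2 = 1)
    (hab : Commute a b) (hac : Commute a c) (hbc : b * c = c * (a ^ 2 * b)) :
    ∃ f : PGroup16 →* G, f (PresentedGroup.of PGen.a) = a ∧ f (PresentedGroup.of PGen.b) = b ∧
      f (PresentedGroup.of PGen.c) = c := by
  let v : PGen → G := fun g => match g with
    | PGen.a => a
    | PGen.b => b
    | PGen.c => c
  have hr : ∀ r ∈ PGen.Prels, FreeGroup.lift v r = 1 := by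
    have va : FreeGroup.lift v PGen.fa = a := by simp [PGen.fa, v]
    have vb : FreeGroup.lift v PGen.fb = b := by simp [PGen.fb, v]
    have vc : FreeGroup.lift v PGen.fc = c := by simp [PGen.fc, v]
    rintro r (rfl | rfl | rfl | rfl | rfl | rfl) <;>
      simp only [map_mul, map_inv, map_pow, va, vb, vc]
    · exact ha
    · exact hb
    · exact hc
    · rw [mul_assoc a⁻¹, ← hab.eq]; group
    · rw [mul_assoc a⁻¹, ← hac.eq]; group
    · rw [mul_assoc c⁻¹, hbc]; group
  exact ⟨PresentedGroup.toGroup hr, PresentedGroup.toGroup.of hr, PresentedGroup.toGroup.of hr,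
    PresentedGroup.toGroup.of hr⟩

theorem auxP_rels : ∃ a b c : PGroup16, a = PresentedGroup.of PGen.a ∧ b = PresentedGroup.of PGen.b ∧
    c = PresentedGroup.of PGen.c ∧ a ^ 4 = 1 ∧ b ^ 2 = 1 ∧ c ^ 2 = 1 ∧ Commute a b ∧ Commute a c ∧
    b * c = c * (a ^ 2 * b) := by
  refine ⟨_, _, _, rfl, rfl, rfl, ?_, ?_, ?_, ?_, ?_, ?_⟩
  · exact PresentedGroup.one_of_mem (rels := PGen.Prels) (x := PGen.fa ^ 4) (by simp [PGen.Prels])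
  · exact PresentedGroup.one_of_mem (rels := PGen.Prels) (x := PGen.fb ^ 2) (by simp [PGen.Prels])
  · exact PresentedGroup.one_of_mem (rels := PGen.Prels) (x := PGen.fc ^ 2) (by simp [PGen.Prels])
  · have := PresentedGroup.one_of_mem (rels := PGen.Prels) (x := PGen.fa⁻¹ * PGen.fb * PGen.fa * PGen.fb⁻¹)
      (by simp [PGen.Prels])
    simp only [map_mul, map_inv] at this
    rw [mul_inv_eq_one, mul_assoc, inv_mul_eq_iff_eq_mul] at this
    exact this.symm
  · have := PresentedGroup.one_of_mem (rels := PGen.Prels) (x := PGen.fa⁻¹ * PGen.fc * PGen.fa * PGen.fc⁻¹)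
      (by simp [PGen.Prels])
    simp only [map_mul, map_inv] at this
    rw [mul_inv_eq_one, mul_assoc, inv_mul_eq_iff_eq_mul] at this
    exact this.symm
  · have := PresentedGroup.one_of_mem (rels := PGen.Prels) 
      (x := PGen.fc⁻¹ * PGen.fb * PGen.fc * (PGen.fa ^ 2 * PGen.fb)⁻¹)
      (by simp [PGen.Prels])
    rw [map_mul, map_inv _ (PGen.fa ^ 2 * PGen.fb), mul_inv_eq_one] at this
    simp only [map_mul, map_inv, map_pow] at this
    rw [mul_assoc, inv_mul_eq_iff_eq_mul] at this
    exact this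

theorem auxP_card : Finite PGroup16 ∧ Nat.card PGroup16 ≤ 16 := by
  obtain ⟨a, b, c, ha', hb', hc', ha, hb, hc, hab, hac, hbc⟩ := auxP_rels
  have hcb : c * b = a ^ 2 * b * c := by
    have h1 : a ^ 4 * (c * b) = a ^ 2 * (b * c) := by
      rw [hbc, ← mul_assoc c, ← (hac.pow_left 2).eq]
      simp only [← mul_assoc, ← pow_add]
    rw [ha, one_mul] at h1
    rw [h1, mul_assoc]
  have hckb : ∀ k : ℕ, c ^ k * b = a ^ (2 * k) * b * c ^ k := by
    intro k
    induction k with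
    | zero => simp
    | succ k ih =>
      calc c ^ (k + 1) * b = c ^ k * a ^ 2 * b * c := by
            rw [pow_succ, mul_assoc, hcb]; simp only [mul_assoc]
        _ = a ^ 2 * (c ^ k * b) * c := by
            rw [← (hac.pow_pow 2 k).eq]; simp only [mul_assoc]
        _ = a ^ (2 * (k + 1)) * b * c ^ (k + 1) := by
            rw [ih, show 2 * (k + 1) = 2 + 2 * k by ring, pow_add, pow_succ c]; simp only [mul_assoc]
  have hckbj : ∀ k j : ℕ, c ^ k * b ^ j = a ^ (2 * k * j) * b ^ j * c ^ k := by
    intro k j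
    induction j with
    | zero => simp
    | succ j ih =>
      rw [pow_succ, ← mul_assoc, ih, mul_assoc _ (c ^ k), hckb]
      calc a ^ (2 * k * j) * b ^ j * (a ^ (2 * k) * b * c ^ k) 
          = a ^ (2 * k * j) * (b ^ j * a ^ (2 * k)) * (b * c ^ k) := by simp only [mul_assoc]
        _ = a ^ (2 * k * (j + 1)) * (b ^ j * b) * c ^ k := by
          rw [← (hab.pow_pow _ _).eq, mul_add, pow_add, mul_one]; simp only [mul_assoc]
  have hmul : ∀ i j k i' j' k' : ℕ, a ^ i * b ^ j * c ^ k * (a ^ i' * b ^ j' * c ^ k') =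
      a ^ (i + i' + 2 * k * j') * b ^ (j + j') * c ^ (k + k') := by
    intro i j k i' j' k'
    calc a ^ i * b ^ j * c ^ k * (a ^ i' * b ^ j' * c ^ k') 
        = a ^ i * b ^ j * (c ^ k * a ^ i') * b ^ j' * c ^ k' := by simp only [mul_assoc]
      _ = a ^ i * (b ^ j * a ^ i') * (c ^ k * b ^ j') * c ^ k' := by
        rw [← (hac.pow_pow _ _).eq]; simp only [mul_assoc]
      _ = a ^ i * a ^ i' * (b ^ j * a ^ (2 * k * j')) * b ^ j' * c ^ k * c ^ k' := by
        rw [← (hab.pow_pow _ _).eq, hckbj]; simp only [mul_assoc]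
      _ = _ := by
        rw [← (hab.pow_pow _ _).eq, pow_add, pow_add, pow_add b, pow_add c]; simp only [mul_assoc]
  let H : Subgroup PGroup16 :=
    { carrier := {g | ∃ i j k : ℕ, g = a ^ i * b ^ j * c ^ k}
      one_mem' := ⟨0, 0, 0, by simp⟩
      mul_mem' := by
        rintro _ _ ⟨i, j, k, rfl⟩ ⟨i', j', k', rfl⟩
        exact ⟨_, _, _, hmul _ _ _ _ _ _⟩
      inv_mem' := by
        rintro _ ⟨i, j, k, rfl⟩
        refine ⟨3 * i + 2 * k * j, j, k, ?_⟩
        rw [inv_eq_iff_mul_eq_one, hmul]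
        have e1 : ∀ n, b ^ (n + n) = 1 := fun n => by rw [← two_mul, pow_mul, hb, one_pow]
        have e2 : ∀ n, c ^ (n + n) = 1 := fun n => by rw [← two_mul, pow_mul, hc, one_pow]
        rw [e1, e2, mul_one, mul_one, show i + (3 * i + 2 * k * j) + 2 * k * j = 4 * (i + k * j) by ring,
          pow_mul, ha, one_pow] }
  have hH : ∀ g, g ∈ H := by
    apply PresentedGroup.generated_by
    intro j
    cases j
    · exact ⟨1, 0, 0, by simp [ha']⟩
    · exact ⟨0, 1, 0, by simp [hb']⟩
    · exact ⟨0, 0, 1, by simp [hc']⟩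
  let F : Fin 4 × Fin 2 × Fin 2 → PGroup16 := fun q => a ^ q.1.1 * b ^ q.2.1.1 * c ^ q.2.2.1
  have hF : Function.Surjective F := by
    intro g
    obtain ⟨i, j, k, rfl⟩ := hH g
    refine ⟨⟨⟨i % 4, Nat.mod_lt _ (by norm_num)⟩, ⟨j % 2, Nat.mod_lt _ (by norm_num)⟩,
      ⟨k % 2, Nat.mod_lt _ (by norm_num)⟩⟩, ?_⟩
    simp only [F]
    rw [← pow_eq_pow_mod _ ha, ← pow_eq_pow_mod _ hb, ← pow_eq_pow_mod _ hc]
  refine ⟨Finite.of_surjective F hF, ?_⟩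
  have := Nat.card_le_card_of_surjective F hF
  simpa using this

theorem aux_iso_P {G : Type*} [Group G] [Finite G] (hG : Nat.card G = 16) (x y z : G)
    (hgen : Subgroup.closure {x, y, z} = ⊤) (hz4 : z ^ 4 = 1) (hx : x ^ 2 = z ^ 2) (hy : y ^ 2 = z ^ 2)
    (hxy : x * y = z ^ 2 * (y * x)) (hxz : Commute x z) (hyz : Commute y z) :
    Nonempty (G ≃* PGroup16) := by
  have key : ∀ u : G, Commute u z → u ^ 2 = z ^ 2 → (z⁻¹ * u) ^ 2 = 1 := by
    intro u hu h
    rw [hu.symm.inv_left.mul_pow, h, inv_pow, inv_mul_cancel]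
  obtain ⟨f, fa, fb, fc⟩ := auxP_hom z (z⁻¹ * x) (z⁻¹ * y) hz4 (key x hxz hx) (key y hyz hy)
    ((Commute.refl z).inv_right.mul_right hxz.symm) ((Commute.refl z).inv_right.mul_right hyz.symm) (by
      have h1 : z⁻¹ * x * (z⁻¹ * y) = z⁻¹ * z⁻¹ * (x * y) := by
        rw [mul_assoc, ← mul_assoc x, hxz.inv_right.eq]; simp only [mul_assoc]
      have h2 : z⁻¹ * y * (z ^ 2 * (z⁻¹ * x)) = z⁻¹ * z * (y * x) := by
        rw [show z ^ 2 * (z⁻¹ * x) = z * x by rw [pow_two]; group, mul_assoc, ← mul_assoc y, hyz.eq]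
        simp only [mul_assoc]
      rw [h1, h2, hxy, pow_two]
      group)
  have hf : Function.Surjective f := by
    rw [← MonoidHom.range_eq_top, eq_top_iff, ← hgen, Subgroup.closure_le]
    rintro g (rfl | rfl | rfl)
    · exact ⟨PresentedGroup.of PGen.a * PresentedGroup.of PGen.b, by rw [map_mul, fa, fb, mul_inv_cancel_left]⟩
    · exact ⟨PresentedGroup.of PGen.a * PresentedGroup.of PGen.c, by rw [map_mul, fa, fc, mul_inv_cancel_left]⟩
    · exact ⟨_, fa⟩
  have hfin := auxP_card.1
  have hb : Function.Bijective f := by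
    apply Function.Surjective.bijective_of_nat_card_le hf
    rw [hG]; exact auxP_card.2
  exact ⟨(MulEquiv.ofBijective f hb).symm⟩


theorem aux_iso_C {G : Type*} [Group G] [Finite G] (hG : Nat.card G = 8) (h2 : ∀ g : G, g ^ 2 = 1) :
    Nonempty (G ≃* (Multiplicative (ZMod 2) × Multiplicative (ZMod 2) × Multiplicative (ZMod 2))) := by
  letI : CommGroup G := { (inferInstance : Group G) with
    mul_comm := by
      have hinv : ∀ g : G, g⁻¹ = g := fun g => by
        rw [inv_eq_iff_mul_eq_one, ← pow_two, h2]
      intro a b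
      have := hinv (a * b)
      rw [mul_inv_rev, hinv, hinv] at this
      exact this.symm }
  letI : Module (ZMod 2) (Additive G) := AddCommGroup.zmodModule (n := 2) (fun x => h2 x.toMul)
  haveI : Module.Finite (ZMod 2) (Additive G) := Module.Finite.of_finite
  have hc : Nat.card (Additive G) = 2 ^ Module.finrank (ZMod 2) (Additive G) := by
    have := Module.natCard_eq_pow_finrank (K := ZMod 2) (V := Additive G)
    simpa using this
  have hc' : Nat.card (Additive G) = 8 := hG
  have hr : Module.finrank (ZMod 2) (Additive G) = 3 := by
    rw [hc'] at hc
    exact (Nat.pow_right_injective (le_refl 2) (show 2 ^ 3 = _ from hc)).symm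
  have hr2 : Module.finrank (ZMod 2) (ZMod 2 × ZMod 2 × ZMod 2) = 3 := by simp
  let e := LinearEquiv.ofFinrankEq (Additive G) (ZMod 2 × ZMod 2 × ZMod 2) (hr.trans hr2.symm)
  exact ⟨{ toFun := fun g => (Multiplicative.ofAdd (e (Additive.ofMul g)).1,
              Multiplicative.ofAdd (e (Additive.ofMul g)).2.1, Multiplicative.ofAdd (e (Additive.ofMul g)).2.2)
           invFun := fun q => (e.symm (q.1.toAdd, q.2.1.toAdd, q.2.2.toAdd)).toMul
           left_inv := fun g => by simp
           right_inv := fun q => by simp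
           map_mul' := fun g h => by simp }⟩

theorem aux_rev {G H : Type*} [Group G] [Group H] (e : G ≃* H) (f : H →* H)
    (h3 : ∀ h, f (f (f h)) = h) (hne : ∃ h, f h ≠ h) : ¬ IsPGroup 2 (MulAut G) := by
  intro hp
  let φ : MulAut H := MonoidHom.toMulEquiv f (f.comp f) (by ext h; exact h3 h) (by ext h; exact h3 h)
  have hp' : IsPGroup 2 (MulAut H) := hp.of_equiv (MulAut.congr e)
  have hφ : φ ^ 3 = 1 := by ext h; exact h3 h
  obtain ⟨k, hk⟩ := hp' φ
  have h1 : orderOf φ ∣ 3 := orderOf_dvd_of_pow_eq_one hφ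
  have h2 : orderOf φ ∣ 2 ^ k := orderOf_dvd_of_pow_eq_one hk
  have hco : Nat.Coprime 3 (2 ^ k) := Nat.Coprime.pow_right k (by norm_num)
  have h3 : orderOf φ = 1 := Nat.eq_one_of_dvd_coprimes hco h1 h2
  rw [orderOf_eq_one_iff] at h3
  obtain ⟨h, hh⟩ := hne
  apply hh
  exact DFunLike.congr_fun h3 h

theorem aux_rev_C {G : Type*} [Group G]
    (e : G ≃* (Multiplicative (ZMod 2) × Multiplicative (ZMod 2) × Multiplicative (ZMod 2))) :
    ¬ IsPGroup 2 (MulAut G) := by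
  refine aux_rev e { toFun := fun q => (q.2.1, q.2.2, q.1), map_one' := rfl, map_mul' := fun _ _ => rfl }
    (fun _ => rfl) ⟨(Multiplicative.ofAdd 1, 1, 1), ?_⟩
  decide

theorem aux_rev_Q {G : Type*} [Group G] (e : G ≃* (QuaternionGroup 2 × Multiplicative (ZMod 2))) :
    ¬ IsPGroup 2 (MulAut G) := by
  let q : QuaternionGroup 2 →* QuaternionGroup 2 :=
    auxQHom (QuaternionGroup.xa 0) (QuaternionGroup.xa 3) (by decide) (by decide) (by decide)
  have hq : ∀ h, q (q (q h)) = h := by decide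
  refine aux_rev e (MonoidHom.prodMap q (MonoidHom.id _)) ?_ ⟨(QuaternionGroup.a 1, 1), ?_⟩
  · rintro ⟨h, j⟩
    exact Prod.ext (hq h) rfl
  · intro h
    have h1 : q (QuaternionGroup.a 1) = QuaternionGroup.a 1 := congrArg Prod.fst h
    revert h1
    decide

theorem aux_rev_P {G : Type*} [Group G] (e : G ≃* PGroup16) : ¬ IsPGroup 2 (MulAut G) := by
  obtain ⟨a, b, c, ha', hb', hc', ha, hb, hc, hab, hac, hbc⟩ := auxP_rels
  have hab2 : Commute (a ^ 2) b := hab.pow_left 2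
  have hac2 : Commute (a ^ 2) c := hac.pow_left 2
  have hcb : b * c = a ^ 2 * (c * b) := by
    rw [hbc, ← mul_assoc, ← hac2.eq, mul_assoc]
  have hcb' : c * b = a ^ 2 * (b * c) := by
    rw [hcb, ← mul_assoc, ← pow_add, ha, one_mul]
  have hb1 : b * b = 1 := by rw [← pow_two, hb]
  have hc1 : c * c = 1 := by rw [← pow_two, hc]
  have ha22 : a ^ 2 * a ^ 2 = 1 := by rw [← pow_add, ha]
  have hbcbc : b * c * (b * c) = a ^ 2 := by
    calc b * c * (b * c) = b * (c * b) * c := by simp only [mul_assoc]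
      _ = b * a ^ 2 * b * (c * c) := by rw [hcb']; simp only [mul_assoc]
      _ = a ^ 2 * (b * b) := by rw [← hab2.eq, hc1, mul_one, mul_assoc]
      _ = a ^ 2 := by rw [hb1, mul_one]
  have habc : Commute a (b * c) := hab.mul_right hac
  obtain ⟨f, fa, fb, fc⟩ := auxP_hom a c (a * (b * c)) ha hc (by
      rw [habc.mul_pow, pow_two (b * c), hbcbc, ha22]) hac ((Commute.refl a).mul_right habc) (by
      calc c * (a * (b * c)) = a * (c * b) * c := by
            rw [← mul_assoc, ← hac.eq]; simp only [mul_assoc]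
        _ = a * (a ^ 2 * b) := by rw [hcb']; simp only [mul_assoc]; rw [hc1, mul_one]
        _ = a * (b * (a ^ 2 * (c * c))) := by rw [hc1, mul_one, hab2.eq]
        _ = a * (b * c) * (a ^ 2 * c) := by
            rw [hac2.eq, ← mul_assoc (a * (b * c))]; simp only [mul_assoc]; rw [← hac2.eq, ← mul_assoc c, ← hac2.eq]; simp only [mul_assoc])
  rw [← ha'] at fa
  rw [← hb'] at fb
  rw [← hc'] at fc
  have hfb : f (f (f b)) = b := by
    rw [fb, fc, map_mul, map_mul, fa, fb, fc]
    calc a * (c * (a * (b * c))) = a * a * (c * b) * c := by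
          rw [← mul_assoc c, ← hac.eq]; simp only [mul_assoc]
      _ = a ^ 2 * a ^ 2 * b * (c * c) := by rw [hcb', ← pow_two]; simp only [mul_assoc]
      _ = b := by rw [ha22, hc1, one_mul, mul_one]
  have hfa : f (f (f a)) = a := by rw [fa, fa, fa]
  have hfc : f (f (f c)) = c := by
    have := congrArg f hfb
    rw [fb] at this
    exact this
  refine aux_rev e f ?_ ⟨b, ?_⟩
  · have : (f.comp (f.comp f)) = MonoidHom.id _ := by
      apply PresentedGroup.ext
      intro j
      cases j
      · rw [← ha']; exact hfa
      · rw [← hb']; exact hfb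
      · rw [← hc']; exact hfc
    exact fun h => DFunLike.congr_fun this h
  · rw [fb]
    intro h
    obtain ⟨g, ga, gb, gc⟩ := auxP_hom (G := Multiplicative (ZMod 2)) 1 (Multiplicative.ofAdd 1) 1
      (by decide) (by decide) (by decide) (Commute.all _ _) (Commute.all _ _) (by decide)
    rw [← hb'] at gb
    rw [← hc', h, gb] at gc
    revert gc
    decide

theorem aux_exists {G : Type*} [Group G] [Finite G] (h : ¬ IsPGroup 2 (MulAut G)) :
    ∃ p : ℕ, p.Prime ∧ p ≠ 2 ∧ ∃ φ : G →* G, (∀ a, φ^[p] a = a) ∧ ∃ a, φ a ≠ a := by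
  haveI : Finite (MulAut G) := inferInstance
  haveI : Fact (Nat.Prime 2) := ⟨Nat.prime_two⟩
  have h1 : ∃ p : ℕ, p.Prime ∧ p ≠ 2 ∧ p ∣ Nat.card (MulAut G) := by
    by_contra! hcon
    apply h
    rw [IsPGroup.iff_card]
    refine ⟨_, Nat.eq_prime_pow_of_unique_prime_dvd Nat.card_pos.ne' ?_⟩
    intro d hd hdv
    by_contra hd2
    exact hcon d hd hd2 hdv
  obtain ⟨p, hp, hp2, hdv⟩ := h1
  haveI : Fact p.Prime := ⟨hp⟩
  obtain ⟨φ, hφ⟩ := exists_prime_orderOf_dvd_card' p hdv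
  refine ⟨p, hp, hp2, φ.toMonoidHom, ?_, ?_⟩
  · intro a
    have h2 : φ ^ p = 1 := hφ ▸ pow_orderOf_eq_one φ
    have h3 : ∀ k : ℕ, ∀ a, (φ.toMonoidHom)^[k] a = (φ ^ k) a := by
      intro k
      induction k with
      | zero => intro a; rfl
      | succ k ih => intro a; rw [Function.iterate_succ_apply, ih, pow_succ]; rfl
    rw [h3, h2]; rfl
  · by_contra! hcon
    have : φ = 1 := by ext a; exact hcon a
    rw [this, orderOf_one] at hφ
    exact hp.one_lt.ne hφ

theorem aux_forward {G : Type*} [Group G] [Finite G] [Group.IsNilpotent G] {n : ℕ} (hn : 3 ≤ n)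
    (hcard : Nat.card G = 2 ^ n) (hclass : Group.nilpotencyClass G = n - 2)
    (h : ¬ IsPGroup 2 (MulAut G)) :
      (Nonempty (G ≃* (Multiplicative (ZMod 2) × Multiplicative (ZMod 2) ×
          Multiplicative (ZMod 2))) ∨
       Nonempty (G ≃* (QuaternionGroup 2 × Multiplicative (ZMod 2))) ∨
       Nonempty (G ≃* PGroup16)) := by
  obtain ⟨p, hp, hp2, φ, hφ, hne⟩ := aux_exists h
  rcases Nat.lt_or_ge 3 n with h4 | h4
  · right
    obtain ⟨rfl, hcen, x, y, z, hgen, hxz, hyz, hx, hy, hz⟩ :=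
      aux_structure h4 hcard hclass hp hp2 φ hφ hne
    rw [commutatorElement_eq_one_iff_commute] at hxz hyz
    have hc16 : Nat.card G = 16 := hcard
    have ht : ∀ g, Commute ⁅x, y⁆ g := fun g => 
      ((Subgroup.mem_center_iff.mp (hcen (Subgroup.commutator_mem_commutator (Subgroup.mem_top x)
        (Subgroup.mem_top y)))) g).symm
    have hxy : x * y = ⁅x, y⁆ * (y * x) := by rw [commutatorElement_def]; group
    have hx2 : Commute (x ^ 2) y := hx ▸ ht y
    have hxy' : x * y = y * x * x ^ 2 := by rw [hx, ← (ht (y * x)).eq]; exact hxy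
    have hx4 : x ^ 4 = 1 := by
      have e1 : x ^ 2 * y = y * x ^ 2 * x ^ 4 := by
        calc x ^ 2 * y = x * (x * y) := by rw [pow_two, mul_assoc]
          _ = x * (y * x * x ^ 2) := by rw [← hxy']
          _ = (x * y) * x ^ 3 := by rw [pow_succ' x 2]; simp only [mul_assoc]
          _ = y * x * x ^ 2 * x ^ 3 := by rw [hxy']
          _ = y * x ^ 2 * x ^ 4 := by
            rw [pow_succ' x 3]
            simp only [mul_assoc, pow_two]
      rw [hx2.eq] at e1
      exact left_eq_mul.mp e1
    have hxy'' : x * y = y * x⁻¹ := by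
      rw [hxy', mul_assoc, ← pow_succ', eq_mul_inv_iff_mul_eq, mul_assoc, ← pow_succ, hx4, mul_one]
    rcases hz with hz | hz
    · left
      exact aux_iso_Q hc16 x y z hgen hx4 (hy.trans hx.symm) hxy'' hz hxz hyz
    · right
      have hz2 : z ^ 2 = x ^ 2 := hz.trans hx.symm
      refine aux_iso_P hc16 x y z hgen ?_ hz2.symm (hy.trans hz.symm) (hz ▸ hxy) hxz hyz
      rw [show 4 = 2 * 2 by norm_num, pow_mul, hz2, ← pow_mul, hx4]
  · left
    obtain rfl : n = 3 := by omega
    have hcl : Group.nilpotencyClass G ≤ 1 := by rw [hclass]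
    have hcomm : ∀ a b : G, a * b = b * a := by
      have h1 : Subgroup.lowerCentralSeries (⊤ : Subgroup G) 1 = ⊥ := by
        have := Subgroup.lowerCentralSeries_nilpotencyClass (G := G)
        rwa [hclass] at this
      rw [Subgroup.top_lowerCentralSeries_one] at h1
      intro a b
      have : ⁅a, b⁆ ∈ commutator G := Subgroup.commutator_mem_commutator (Subgroup.mem_top a) (Subgroup.mem_top b)
      rw [h1, Subgroup.mem_bot, commutatorElement_eq_one_iff_mul_comm] at this
      exact this
    letI : CommGroup G := { (inferInstance : Group G) with mul_comm := hcomm }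
    exact aux_iso_C hcard (aux_abelian (A := G) hcard le_rfl hp hp2 φ hφ hne).1

/-- A finite `2`-group `G` of order `2 ^ n` (`n ≥ 3`) and coclass `2` (nilpotency class
`n - 2`) has an automorphism group which is not a `2`-group if and only if `G` is isomorphic
to `C₂ × C₂ × C₂`, to `Q₈ × C₂`, or to
`P = ⟨a, b, c ∣ a⁴ = b² = c² = 1, bᵃ = b, cᵃ = c, bᶜ = a²b⟩`. -/
theorem coclass_two_aut_not_pGroup_iff
    {G : Type*} [Group G] [Finite G] [Group.IsNilpotent G] {n : ℕ} (hn : 3 ≤ n)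
    (hcard : Nat.card G = 2 ^ n) (hclass : Group.nilpotencyClass G = n - 2) :
    ¬ IsPGroup 2 (MulAut G) ↔
      (Nonempty (G ≃* (Multiplicative (ZMod 2) × Multiplicative (ZMod 2) ×
          Multiplicative (ZMod 2))) ∨
       Nonempty (G ≃* (QuaternionGroup 2 × Multiplicative (ZMod 2))) ∨
       Nonempty (G ≃* PGroup16)) := by
  constructor
  · exact aux_forward hn hcard hclass
  · rintro (⟨⟨e⟩⟩ | ⟨⟨e⟩⟩ | ⟨⟨e⟩⟩)
    · exact aux_rev_C e
    · exact aux_rev_Q e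
    · exact aux_rev_P e
end

section
/- Let G be a finite group of order 2^n with n ≥ 5 and nilpotency class n − 2 (i.e., G is a 2-group of coclass 2 and order at least 2^5). Then the automorphism group Aut(G) is a 2-group. -/
namespace CoclassTwo

open scoped commutatorElement

variable {G : Type*} [Group G]

/-- Elements whose commutators with all elements of `S` lie in the normal subgroup `N`. -/
def cen (N : Subgroup G) [N.Normal] (S : Set G) : Subgroup G :=
  (Subgroup.centralizer ((QuotientGroup.mk' N) '' S)).comap (QuotientGroup.mk' N)

theorem comm_mem_iff (N : Subgroup G) [N.Normal] (s x : G) :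
    ⁅s, x⁆ ∈ N ↔ (s : G ⧸ N) * (x : G ⧸ N) = (x : G ⧸ N) * (s : G ⧸ N) := by
  rw [← commutatorElement_eq_one_iff_mul_comm, ← QuotientGroup.eq_one_iff]
  rfl

theorem mem_cen {N : Subgroup G} [N.Normal] {S : Set G} {x : G} :
    x ∈ cen N S ↔ ∀ s ∈ S, ⁅s, x⁆ ∈ N := by
  simp only [cen, Subgroup.mem_comap, Subgroup.mem_centralizer_iff, Set.forall_mem_image,
    comm_mem_iff]
  rfl

theorem comm_symm {N : Subgroup G} {x y : G} (h : ⁅x, y⁆ ∈ N) : ⁅y, x⁆ ∈ N := by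
  rw [← commutatorElement_inv]
  exact N.inv_mem h

theorem cent_step {N : Subgroup G} [N.Normal] {c x y : G} (h : ⁅c, x⁆⁻¹ * ⁅c, y⁆ ∈ N) :
    ⁅c, x⁻¹ * y⁆ ∈ N := by
  have := (inferInstance : N.Normal).conj_mem _ h x⁻¹
  convert this using 1
  simp only [commutatorElement_def]
  group

theorem relIndex_mul_card [Finite G] {A B : Subgroup G} (h : A ≤ B) :
    A.relIndex B * Nat.card A = Nat.card B := by
  have h1 := Subgroup.card_mul_index (A.subgroupOf B)
  rw [Nat.card_congr (Subgroup.subgroupOfEquivOfLe h).toEquiv] at h1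
  rw [mul_comm]
  exact h1

theorem card_lt [Finite G] {A B : Subgroup G} (h : A < B) : 2 * Nat.card A ≤ Nat.card B := by
  have h1 := relIndex_mul_card h.le
  have h2 : A.relIndex B ≠ 1 := fun h3 => h.not_ge (Subgroup.relIndex_eq_one.1 h3)
  have h3 : A.relIndex B ≠ 0 := by
    intro h3
    rw [h3, zero_mul] at h1
    exact Nat.card_pos.ne h1
  have h4 : 2 ≤ A.relIndex B := by omega
  calc _ ≤ A.relIndex B * Nat.card A := Nat.mul_le_mul_right _ h4
    _ = _ := h1

theorem idx2 [Finite G] {A B : Subgroup G} (hAB : A ≤ B) (h : Nat.card B ≤ 2 * Nat.card A)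
    {x y : G} (hx : x ∈ B) (hy : y ∈ B) (hxA : x ∉ A) (hyA : y ∉ A) : x⁻¹ * y ∈ A := by
  have h1 := relIndex_mul_card hAB
  have hpos : 0 < Nat.card A := Nat.card_pos
  have h4 : A.relIndex B ≤ 2 := by
    rw [← h1] at h
    exact Nat.le_of_mul_le_mul_right h hpos
  have h2 : A.relIndex B ≠ 1 := fun h3 => hxA (Subgroup.relIndex_eq_one.1 h3 hx)
  have h3 : A.relIndex B ≠ 0 := by
    intro h3
    rw [h3, zero_mul] at h1
    exact Nat.card_pos.ne h1
  have h5 : (A.subgroupOf B).index = 2 := by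
    change A.relIndex B = 2
    omega
  have := (Subgroup.mul_mem_iff_of_index_two h5 (a := (⟨x, hx⟩ : B)⁻¹) (b := ⟨y, hy⟩))
  have h6 := this.2 (by simp [Subgroup.mem_subgroupOf, hxA, hyA])
  simpa [Subgroup.mem_subgroupOf] using h6

theorem nongen [Finite G] [Group.IsNilpotent G] {S : Subgroup G} (h : S ⊔ commutator G = ⊤) :
    S = ⊤ := by
  by_contra hS
  obtain ⟨M, hM, hSM⟩ := (eq_top_or_exists_le_coatom S).resolve_left hS
  have hn : M.Normal :=
    Subgroup.NormalizerCondition.normal_of_coatom M Group.normalizerCondition_of_isNilpotent hM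
  have hnt : Nontrivial (G ⧸ M) := QuotientGroup.nontrivial_iff.2 hM.1
  have hlt := Group.IsSolvable.commutator_lt_top_of_nontrivial (G ⧸ M)
  refine hlt.ne ?_
  have h1 := congrArg (Subgroup.map (QuotientGroup.mk' M)) h
  rw [Subgroup.map_sup, commutator_def, Subgroup.map_commutator,
    Subgroup.map_top_of_surjective _ (QuotientGroup.mk'_surjective M)] at h1
  have h2 : S.map (QuotientGroup.mk' M) = ⊥ := by
    rw [Subgroup.map_eq_bot_iff, QuotientGroup.ker_mk']
    exact hSM
  rw [h2, bot_sup_eq] at h1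
  exact h1

/-- The fixed subgroup of an automorphism. -/
def fix (α : MulAut G) : Subgroup G where
  carrier := {x | α x = x}
  mul_mem' := by
    intro a b ha hb
    simp only [Set.mem_ofPred_eq] at *
    rw [map_mul, ha, hb]
  one_mem' := map_one α
  inv_mem' := by
    intro a ha
    simp only [Set.mem_ofPred_eq] at *
    rw [map_inv, ha]

theorem mem_fix {α : MulAut G} {x : G} : x ∈ fix α ↔ α x = x := Iff.rfl

theorem exists_fixed [Finite G] {n p : ℕ} (hG : Nat.card G = 2 ^ n) (hp : p.Prime) (hp2 : p ≠ 2)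
    {α : MulAut G} (hα : α ^ p = 1) {A : Subgroup G} (hA : ∀ a ∈ A, α a ∈ A) {x : G}
    (hx : x⁻¹ * α x ∈ A) : ∃ y ∈ fix α, x⁻¹ * y ∈ A := by
  classical
  have := Fact.mk hp
  let T := {y : G // x⁻¹ * y ∈ A}
  have hT : ∀ y : G, x⁻¹ * y ∈ A → x⁻¹ * α y ∈ A := by
    intro y hy
    have := A.mul_mem hx (hA _ hy)
    rw [map_mul, map_inv] at this
    simpa [mul_assoc] using this
  let f : Function.End T := fun y => ⟨α y.1, hT _ y.2⟩
  have hfk : ∀ k : ℕ, ∀ y : T, ((f ^ k) y).1 = (α ^ k) y.1 := by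
    intro k
    induction k with
    | zero => intro y; rfl
    | succ k ih =>
      intro y
      rw [pow_succ', pow_succ']
      change α ((f ^ k) y).1 = α ((α ^ k) y.1)
      rw [ih]
  have hf : f ^ p ^ 1 = 1 := by
    funext y
    apply Subtype.ext
    rw [hfk, pow_one, hα]
    rfl
  have : Fintype T := Fintype.ofFinite _
  have key := Equiv.Perm.card_fixedPoints_modEq (p := p) (n := 1) hf
  have hcT : Fintype.card T = Nat.card A := by
    rw [← Nat.card_eq_fintype_card]
    refine Nat.card_congr ⟨fun y => ⟨x⁻¹ * y.1, y.2⟩, fun a => ⟨x * a.1, by simp⟩, ?_, ?_⟩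
    · intro y; simp
    · intro a; simp
  by_contra hne
  push Not at hne
  have hempty : Fintype.card (Function.fixedPoints f) = 0 := by
    rw [Fintype.card_eq_zero_iff]
    refine ⟨fun y => hne y.1.1 ?_ y.1.2⟩
    exact congrArg Subtype.val y.2
  rw [hempty, hcT] at key
  have hd : p ∣ Nat.card A := (Nat.modEq_zero_iff_dvd).1 key
  have hd2 : p ∣ 2 ^ n := hd.trans (hG ▸ Subgroup.card_subgroup_dvd_card A)
  exact hp2 ((Nat.prime_dvd_prime_iff_eq hp Nat.prime_two).1 (hp.dvd_of_dvd_pow hd2))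

theorem chain [Finite G] {n p : ℕ} (hG : Nat.card G = 2 ^ n) (hp : p.Prime) (hp2 : p ≠ 2)
    {α : MulAut G} (hα : α ^ p = 1) {A B : Subgroup G} (hA : ∀ a ∈ A, α a ∈ A)
    (hB : ∀ a ∈ B, α a ∈ B)
    (h : ∀ x ∈ B, ∀ y ∈ B, x ∉ A → y ∉ A → x⁻¹ * y ∈ A) : B ≤ fix α ⊔ A := by
  have hA' : ∀ a, α a ∈ A → a ∈ A := by
    intro a ha
    have hk : ∀ k : ℕ, (α ^ k) (α a) ∈ A := by
      intro k
      induction k with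
      | zero => exact ha
      | succ k ih => rw [pow_succ']; exact hA _ ih
    have h1 := hk (p - 1)
    have h2 : (α ^ (p - 1)) (α a) = (α ^ p) a := by
      conv_rhs => rw [← Nat.sub_add_cancel hp.one_le, pow_succ]
      rfl
    rw [h2, hα] at h1
    exact h1
  intro x hx
  by_cases hxA : x ∈ A
  · exact Subgroup.mem_sup_right hxA
  · have h1 : x⁻¹ * α x ∈ A := h x hx _ (hB _ hx) hxA (fun h2 => hxA (hA' _ h2))
    obtain ⟨y, hy, hxy⟩ := exists_fixed hG hp hp2 hα hA h1
    have : x = y * (x⁻¹ * y)⁻¹ := by group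
    rw [this]
    exact Subgroup.mul_mem_sup hy (A.inv_mem hxy)

theorem char_map {H : Subgroup G} (h : H.Characteristic) (α : MulAut G) {a : G} (ha : a ∈ H) :
    α a ∈ H :=
  Subgroup.characteristic_iff_le_comap.1 h α ha

theorem char_surj {H : Subgroup G} (h : H.Characteristic) (α : MulAut G) {a : G} (ha : a ∈ H) :
    ∃ b ∈ H, α b = a :=
  ⟨α.symm a, Subgroup.characteristic_iff_le_comap.1 h α.symm ha, α.apply_symm_apply a⟩

theorem map_comm (α : MulAut G) (a b : G) : α ⁅a, b⁆ = ⁅α a, α b⁆ :=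
  map_commutatorElement (α : G ≃* G).toMonoidHom a b

/-- Jacobi-type lemma. -/
theorem jacobi {N2 N3 : Subgroup G} [N3.Normal]
    (h23 : ∀ z ∈ N2, ∀ g : G, ⁅z, g⁆ ∈ N3) {t : G} (ht : ∀ g : G, ⁅t, g⁆ ∈ N2) :
    t ∈ cen N3 (commutator G : Set G) := by
  have hle : commutator G ≤ cen N3 {t} := by
    rw [commutator_def, Subgroup.commutator_le]
    intro g _ h _
    rw [mem_cen]
    intro s hs
    rw [Set.mem_singleton_iff.1 hs, comm_mem_iff]
    have hz : ∀ g k : G, Commute (⁅(t : G ⧸ N3), (g : G ⧸ N3)⁆) (k : G ⧸ N3) := fun g k =>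
      (comm_mem_iff N3 _ _).1 (h23 _ (ht g) k)
    have e1 : ∀ u : G, (t : G ⧸ N3) * u * (t : G ⧸ N3)⁻¹ = ⁅(t : G ⧸ N3), (u : G ⧸ N3)⁆ * u := by
      intro u; simp [commutatorElement_def]
    rw [← mul_inv_eq_iff_eq_mul]
    change (t : G ⧸ N3) * ⁅(g : G ⧸ N3), (h : G ⧸ N3)⁆ * (t : G ⧸ N3)⁻¹ = ⁅(g : G ⧸ N3), (h : G ⧸ N3)⁆
    have e2 : (t : G ⧸ N3) * ⁅(g : G ⧸ N3), (h : G ⧸ N3)⁆ * (t : G ⧸ N3)⁻¹ =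
        ⁅(t : G ⧸ N3) * g * (t : G ⧸ N3)⁻¹, (t : G ⧸ N3) * h * (t : G ⧸ N3)⁻¹⁆ := by
      simp only [commutatorElement_def]; group
    rw [e2, e1, e1]
    have c1 := hz g
    have c2 := hz h
    generalize ⁅(t : G ⧸ N3), (g : G ⧸ N3)⁆ = z at c1
    generalize ⁅(t : G ⧸ N3), (h : G ⧸ N3)⁆ = w at c2
    obtain ⟨w', rfl⟩ := QuotientGroup.mk_surjective w
    have a1 : ⁅z * (g : G ⧸ N3), (w' : G ⧸ N3) * h⁆ =
        z * (g * (w' * h) * (g : G ⧸ N3)⁻¹ ) * z⁻¹ * ((w' : G ⧸ N3) * h)⁻¹ := by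
      simp only [commutatorElement_def]; group
    rw [a1]
    have c3 : Commute z (g * (w' * h) * (g : G ⧸ N3)⁻¹) := by
      have := c1 (g * (w' * h) * g⁻¹)
      simpa using this
    rw [c3.eq, mul_inv_cancel_right, ← mul_assoc (g : G ⧸ N3), ← (c2 g).eq]
    have c4 : Commute (w' : G ⧸ N3) (⁅(g : G ⧸ N3), (h : G ⧸ N3)⁆) := c2 ⁅g, h⁆
    have a2 : (w' : G ⧸ N3) * g * h * (g : G ⧸ N3)⁻¹ * ((w' : G ⧸ N3) * h)⁻¹ =
      w' * ⁅(g : G ⧸ N3), (h : G ⧸ N3)⁆ * (w' : G ⧸ N3)⁻¹ := by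
      simp only [commutatorElement_def]; group
    rw [a2, c4.eq, mul_inv_cancel_right]
  rw [mem_cen]
  intro s hs
  exact comm_symm (mem_cen.1 (hle hs) t rfl)

/-- If the abelianization has order four and two independent elements commute modulo `M`, then the derived subgroup lies in `M`. -/
theorem comm_le [Finite G] (h4 : Nat.card G = 4 * Nat.card (commutator G)) {M : Subgroup G}
    [M.Normal] (hM : ∀ z ∈ commutator G, ∀ g : G, ⁅z, g⁆ ∈ M) {x y : G}
    (hx : x ∉ commutator G) (hy : y ∉ commutator G) (hxy : x⁻¹ * y ∉ commutator G)
    (hc : ⁅x, y⁆ ∈ M) : commutator G ≤ M := by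
  have gen : ∀ S : Subgroup G, commutator G ≤ S → x ∈ S → y ∈ S → S = ⊤ := by
    intro S hS hxS hyS
    by_contra hne
    have h1 := card_lt (lt_top_iff_ne_top.2 hne)
    rw [Subgroup.card_top] at h1
    exact hxy (idx2 hS (by omega) hxS hyS hx hy)
  have hself : ∀ a : G, ⁅a, a⁆ ∈ M := fun a => by
    rw [commutatorElement_self]; exact M.one_mem
  have hsub : ∀ S : Set G, commutator G ≤ cen M S := fun S z hz =>
    mem_cen.2 fun s _ => comm_symm (hM z hz s)
  have h1 : cen M {x} = ⊤ := gen _ (hsub _)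
    (mem_cen.2 fun s hs => by rw [Set.mem_singleton_iff.1 hs]; exact hself x)
    (mem_cen.2 fun s hs => by rw [Set.mem_singleton_iff.1 hs]; exact hc)
  have h2 : cen M {y} = ⊤ := gen _ (hsub _)
    (mem_cen.2 fun s hs => by rw [Set.mem_singleton_iff.1 hs]; exact comm_symm hc)
    (mem_cen.2 fun s hs => by rw [Set.mem_singleton_iff.1 hs]; exact hself y)
  have h3 : cen M Set.univ = ⊤ := gen _ (hsub _)
    (mem_cen.2 fun s _ => comm_symm (mem_cen.1 (show s ∈ cen M {x} from h1 ▸ Subgroup.mem_top s) x rfl))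
    (mem_cen.2 fun s _ => comm_symm (mem_cen.1 (show s ∈ cen M {y} from h2 ▸ Subgroup.mem_top s) y rfl))
  rw [commutator_def, Subgroup.commutator_le]
  intro a _ b _
  exact mem_cen.1 (h3 ▸ Subgroup.mem_top b) a (Set.mem_univ _)

/-- The case of abelianization of order four. -/
theorem case_four [Finite G] (h4 : Nat.card G = 4 * Nat.card (commutator G)) {L2 L3 : Subgroup G}
    [L2.Normal] [L3.Normal] (hL2 : ∀ z ∈ commutator G, ∀ g : G, ⁅z, g⁆ ∈ L2)
    (hL3 : ∀ z ∈ L2, ∀ g : G, ⁅z, g⁆ ∈ L3) (h21 : L2 ≤ commutator G)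
    (hlt : ¬ commutator G ≤ L2) :
    ∃ x ∈ cen L3 (commutator G : Set G), x ∉ commutator G := by
  have hsq : ∀ x : G, x * x ∈ commutator G := by
    intro x
    by_contra hxx
    have hx : x ∉ commutator G := fun h => hxx (mul_mem h h)
    refine hlt (comm_le h4 hL2 hx hxx (by simpa using hx) ?_)
    have : ⁅x, x * x⁆ = 1 := by simp only [commutatorElement_def]; group
    rw [this]; exact L2.one_mem
  obtain ⟨a, b, hab⟩ : ∃ a b : G, ⁅a, b⁆ ∉ L2 := by
    by_contra hne
    push Not at hne
    apply hlt
    rw [commutator_def, Subgroup.commutator_le]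
    intro a _ b _
    exact hne a b
  have ha : a ∉ commutator G := fun h => hab (hL2 a h b)
  have hb : b ∉ commutator G := fun h => hab (comm_symm (hL2 b h a))
  have hab' : a⁻¹ * b ∉ commutator G := by
    intro h
    apply hab
    have h1 := (inferInstance : L2.Normal).conj_mem _ (comm_symm (hL2 _ h a)) a
    convert h1 using 1
    simp only [commutatorElement_def]; group
  set c := ⁅a, b⁆ with hc
  have hcm : c ∈ commutator G := by
    rw [commutator_def]
    exact Subgroup.commutator_mem_commutator (Subgroup.mem_top a) (Subgroup.mem_top b)
  have hc2 : c * c ∈ L2 := by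
    have h1 := hL2 _ (hsq a) b
    have h2 : ⁅a * a, b⁆ = ⁅a, c⁆ * (c * c) := by
      rw [hc]; simp only [commutatorElement_def]; group
    rw [h2] at h1
    exact (Subgroup.mul_mem_cancel_left _ (comm_symm (hL2 c hcm a))).1 h1
  have hMle : Subgroup.zpowers c ⊔ L2 ≤ commutator G :=
    sup_le (by rwa [Subgroup.zpowers_le]) h21
  have hMn : (Subgroup.zpowers c ⊔ L2).Normal := by
    constructor
    intro y hy g
    have : g * y * g⁻¹ = ⁅g, y⁆ * y := by simp [commutatorElement_def]
    rw [this]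
    exact mul_mem (Subgroup.mem_sup_right (comm_symm (hL2 y (hMle hy) g))) hy
  have hM := comm_le h4 (M := Subgroup.zpowers c ⊔ L2)
    (fun z hz g => Subgroup.mem_sup_right (hL2 z hz g)) ha hb hab'
    (Subgroup.mem_sup_left (Subgroup.mem_zpowers c))
  have hcos : ∀ y ∈ commutator G, y ∈ L2 ∨ c⁻¹ * y ∈ L2 := by
    intro y hy
    obtain ⟨u, hu, v, hv, rfl⟩ := Subgroup.mem_sup_of_normal_right.1 (hM hy)
    obtain ⟨k, rfl⟩ := Subgroup.mem_zpowers_iff.1 hu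
    obtain ⟨m, rfl | rfl⟩ := Int.even_or_odd' k
    · left
      refine mul_mem ?_ hv
      rw [zpow_mul, zpow_two]
      exact zpow_mem hc2 m
    · right
      rw [← mul_assoc]
      refine mul_mem ?_ hv
      rw [add_comm, zpow_add, zpow_one, inv_mul_cancel_left, zpow_mul, zpow_two]
      exact zpow_mem hc2 m
  obtain ⟨x, hx⟩ : ∃ x : G, x * x ∉ L2 := by
    by_contra hne
    push Not at hne
    apply hab
    have hn : L2.Normal := inferInstance
    have h1 : c = (a * b) * (a * b) * ((b⁻¹ * (a⁻¹ * a⁻¹) * b⁻¹⁻¹) * (b⁻¹ * b⁻¹)) := by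
      rw [hc]; simp only [commutatorElement_def]; group
    rw [h1]
    exact mul_mem (hne _) (mul_mem (hn.conj_mem _ (hne _) _) (hne _))
  refine ⟨x, ?_, ?_⟩
  · have h1 : c⁻¹ * (x * x) ∈ L2 := (hcos _ (hsq x)).resolve_left hx
    rw [mem_cen]
    intro y hy
    have hL : ∀ z ∈ L2, z ∈ cen L3 {x} := fun z hz => mem_cen.2 fun s hs => comm_symm (hL3 z hz s)
    have hxx : x * x ∈ cen L3 {x} := mem_cen.2 fun s hs => by
      rw [Set.mem_singleton_iff.1 hs]
      have : ⁅x, x * x⁆ = 1 := by simp only [commutatorElement_def]; group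
      rw [this]; exact L3.one_mem
    have hy' : y ∈ cen L3 {x} := by
      rcases hcos y hy with h | h
      · exact hL y h
      · have e : y = (x * x) * ((c⁻¹ * (x * x))⁻¹ * (c⁻¹ * y)) := by group
        rw [e]
        exact mul_mem hxx (hL _ (mul_mem (inv_mem h1) h))
    exact comm_symm (mem_cen.1 hy' x rfl)
  · intro hxm
    apply hx
    rcases hcos x hxm with h | h
    · exact mul_mem h h
    · have e : x * x = (c * (c⁻¹ * x) * c⁻¹) * (c * c) * (c⁻¹ * x) := by group
      rw [e]
      exact mul_mem (mul_mem ((inferInstance : L2.Normal).conj_mem _ h c) hc2) h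

end CoclassTwo

open CoclassTwo
open scoped commutatorElement

/-- The automorphism group of any finite `2`-group of order `2 ^ n` with `n ≥ 5` and
coclass `2` (nilpotency class `n - 2`) is a `2`-group. -/
theorem aut_isPGroup_of_coclass_two_of_card_ge
    {G : Type*} [Group G] [Finite G] [Group.IsNilpotent G] {n : ℕ} (hn : 5 ≤ n)
    (hcard : Nat.card G = 2 ^ n) (hclass : Group.nilpotencyClass G = n - 2) :
    IsPGroup 2 (MulAut G) := by
  suffices H : ∀ p : ℕ, p.Prime → p ∣ Nat.card (MulAut G) → p = 2 by
    exact IsPGroup.of_card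
      (Nat.eq_prime_pow_of_unique_prime_dvd Nat.card_pos.ne' (fun {d} hd hdv => H d hd hdv))
  intro p hp hdvd
  by_contra hp2
  have := Fact.mk hp
  obtain ⟨α, hα⟩ := exists_prime_orderOf_dvd_card' p hdvd
  have hαp : α ^ p = 1 := hα ▸ pow_orderOf_eq_one α
  -- it suffices to cover `G` by fixed points modulo the derived subgroup
  have hfin : ¬ ((⊤ : Subgroup G) ≤ fix α ⊔ commutator G) := by
    intro h
    have h1 := nongen (top_le_iff.1 h)
    have h2 : α = 1 := by
      ext x
      exact mem_fix.1 (h1 ▸ Subgroup.mem_top x)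
    rw [h2, orderOf_one] at hα
    exact hp.one_lt.ne hα
  apply hfin
  -- the lower central series
  set L : ℕ → Subgroup G := (⊤ : Subgroup G).lowerCentralSeries with hL
  have hL1 : L 1 = commutator G := Subgroup.top_lowerCentralSeries_one
  have hanti : Antitone L := Subgroup.lowerCentralSeries_antitone _
  have hbot : ∀ i, L i = ⊥ ↔ n - 2 ≤ i := by
    intro i
    rw [← hclass]
    exact Subgroup.lowerCentralSeries_eq_bot_iff_nilpotencyClass_le
  have hstrict : ∀ i, i < n - 2 → L (i + 1) < L i := by
    intro i hi
    refine lt_of_le_of_ne (hanti (Nat.le_succ i)) ?_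
    intro heq
    have hst : ∀ k, L (i + k) = L i := by
      intro k
      induction k with
      | zero => rfl
      | succ k ih =>
        have : L (i + (k + 1)) = ⁅L (i + k), ⊤⁆ := rfl
        rw [this, ih, ← heq]
        conv_rhs => rw [heq]
        rw [heq]
        exact heq
    have h1 := hst (n - 2 - i)
    rw [(hbot _).2 (by omega)] at h1
    have := (hbot i).1 h1.symm
    omega
  have hpow : ∀ i, ∃ e, Nat.card (L i) = 2 ^ e := by
    intro i
    have h1 : Nat.card (L i) ∣ 2 ^ n := hcard ▸ Subgroup.card_subgroup_dvd_card (L i)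
    obtain ⟨e, _, he⟩ := (Nat.dvd_prime_pow Nat.prime_two).1 h1
    exact ⟨e, he⟩
  choose e he using hpow
  have hstep : ∀ i, i < n - 2 → e (i + 1) + 1 ≤ e i := by
    intro i hi
    have h1 := card_lt (hstrict i hi)
    rw [he, he, ← pow_succ'] at h1
    exact (Nat.pow_le_pow_iff_right (by norm_num)).1 h1
  have hlow : ∀ k, k ≤ n - 2 → k ≤ e (n - 2 - k) := by
    intro k
    induction k with
    | zero => intro _; exact Nat.zero_le _
    | succ k ih =>
      intro hk
      have h1 := hstep (n - 2 - (k + 1)) (by omega)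
      have h2 : n - 2 - (k + 1) + 1 = n - 2 - k := by omega
      rw [h2] at h1
      have := ih (by omega)
      omega
  have he3 : n - 5 ≤ e 3 := by
    have h1 := hlow (n - 5) (by omega)
    have h2 : n - 2 - (n - 5) = 3 := by omega
    rwa [h2] at h1
  have hs2 := hstep 2 (by omega)
  have hs1 := hstep 1 (by omega)
  have hs0 := hstep 0 (by omega)
  norm_num at hs2 hs1 hs0
  have he0 : e 0 = n := by
    have h1 := he 0
    have h2 : Nat.card (L 0) = Nat.card G := Subgroup.card_top
    rw [h2, hcard] at h1
    exact (Nat.pow_right_injective (le_refl 2) h1).symm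
  have hcom : ∀ i, ∀ z ∈ L i, ∀ g : G, ⁅z, g⁆ ∈ L (i + 1) := fun i z hz g =>
    Subgroup.commutator_mem_commutator hz (Subgroup.mem_top g)
  have hchar : ∀ i, (L i).Characteristic := fun i => by rw [hL]; infer_instance
  have hnorm : ∀ i, (L i).Normal := fun i => by rw [hL]; infer_instance
  have hcom1 : ∀ z ∈ commutator G, ∀ g : G, ⁅z, g⁆ ∈ L 2 := by
    rw [← hL1]; exact hcom 1
  have hLα : ∀ i, ∀ a ∈ L i, α a ∈ L i := fun i a ha => char_map (hchar i) α ha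
  have hGα : ∀ a ∈ commutator G, α a ∈ commutator G := by rw [← hL1]; exact hLα 1
  have htopα : ∀ a ∈ (⊤ : Subgroup G), α a ∈ (⊤ : Subgroup G) := fun a _ => Subgroup.mem_top _
  have hcardG' : Nat.card (commutator G) = 2 ^ e 1 := by rw [← hL1]; exact he 1
  have h1nle : ¬ commutator G ≤ L 2 := by rw [← hL1]; exact (hstrict 1 (by omega)).not_ge
  have h21 : L 2 ≤ commutator G := by rw [← hL1]; exact hanti (by norm_num)
  have h32 : L 3 ≤ L 2 := hanti (by norm_num)
  -- the two-step centralizer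
  set C := cen (L 3) (commutator G : Set G) with hC
  have hCα : ∀ a ∈ C, α a ∈ C := by
    intro a ha
    rw [hC, mem_cen] at ha ⊢
    intro s hs
    obtain ⟨b, hb, rfl⟩ := char_surj (hL1 ▸ hchar 1) α hs
    rw [← map_comm]
    exact hLα 3 _ (ha b hb)
  have hCtop : C ≠ ⊤ := by
    intro h
    refine (hstrict 2 (by omega)).not_ge ?_
    change ⁅L 1, (⊤ : Subgroup G)⁆ ≤ L 3
    rw [Subgroup.commutator_le, hL1]
    intro s hs g hg
    rw [← h, hC, mem_cen] at hg
    exact hg s hs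
  have hG'C : commutator G ≤ C := fun t ht => jacobi (hcom 2) (fun g => hcom1 t ht g)
  have hCcard := card_lt (lt_top_iff_ne_top.2 hCtop)
  rw [Subgroup.card_top] at hCcard
  obtain h | h | h : n - 1 ≤ e 1 ∨ e 1 = n - 2 ∨ e 1 = n - 3 := by omega
  · refine chain hcard hp hp2 hαp hGα htopα ?_
    intro x hx y hy hxA hyA
    refine idx2 le_top ?_ hx hy hxA hyA
    rw [Subgroup.card_top, hcard, hcardG', ← pow_succ']
    exact Nat.pow_le_pow_right (by norm_num) (by omega)
  · have h4 : Nat.card G = 4 * Nat.card (commutator G) := by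
      rw [hcard, hcardG', h]
      have : n = n - 2 + 2 := by omega
      conv_lhs => rw [this, pow_add]
      ring
    obtain ⟨x, hxC, hx⟩ := case_four h4 hcom1 (hcom 2) h21 h1nle
    have hlt : commutator G < C := lt_of_le_of_ne hG'C (fun h => hx (h ▸ hxC))
    have h5 := card_lt hlt
    have s1 : (⊤ : Subgroup G) ≤ fix α ⊔ C := chain hcard hp hp2 hαp hCα htopα
      fun x hx y hy hxA hyA => idx2 le_top (by rw [Subgroup.card_top]; omega) hx hy hxA hyA
    have s2 : C ≤ fix α ⊔ commutator G := chain hcard hp hp2 hαp hGα hCα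
      fun x hx y hy hxA hyA => idx2 hG'C (by omega) hx hy hxA hyA
    exact s1.trans (sup_le le_sup_left s2)
  · have h8 : Nat.card G = 8 * Nat.card (commutator G) := by
      rw [hcard, hcardG', h]
      have : n = n - 3 + 3 := by omega
      conv_lhs => rw [this, pow_add]
      ring
    have hc12 : Nat.card (L 1) ≤ 2 * Nat.card (L 2) := by
      rw [he, he, ← pow_succ']
      exact Nat.pow_le_pow_right (by norm_num) (by omega)
    have hc23 : Nat.card (L 2) ≤ 2 * Nat.card (L 3) := by
      rw [he, he, ← pow_succ']
      exact Nat.pow_le_pow_right (by norm_num) (by omega)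
    obtain ⟨c, hc1, hc2⟩ := Set.not_subset.1 h1nle
    have hCiff : ∀ x, ⁅c, x⁆ ∈ L 3 → x ∈ C := by
      intro x hx
      rw [hC, mem_cen]
      have hcx : c ∈ cen (L 3) {x} := mem_cen.2 fun s hs => by
        rw [Set.mem_singleton_iff.1 hs]; exact comm_symm hx
      have hLx : ∀ z ∈ L 2, z ∈ cen (L 3) {x} := fun z hz =>
        mem_cen.2 fun s hs => comm_symm (hcom 2 z hz s)
      intro s hs
      have hsx : s ∈ cen (L 3) {x} := by
        by_cases hs2 : s ∈ L 2
        · exact hLx s hs2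
        · have h6 : c⁻¹ * s ∈ L 2 := idx2 (hanti (by norm_num)) hc12
            (by rw [hL1]; exact hc1) (by rw [hL1]; exact hs) hc2 hs2
          have := mul_mem hcx (hLx _ h6)
          rwa [mul_inv_cancel_left] at this
      exact comm_symm (mem_cen.1 hsx x rfl)
    have hCidx : ∀ x y : G, x ∉ C → y ∉ C → x⁻¹ * y ∈ C := by
      intro x y hx hy
      exact hCiff _ (cent_step (idx2 h32 hc23 (hcom1 c hc1 x) (hcom1 c hc1 y)
        (fun h => hx (hCiff _ h)) (fun h => hy (hCiff _ h))))
    have s1 : (⊤ : Subgroup G) ≤ fix α ⊔ C := chain hcard hp hp2 hαp hCα htopα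
      fun x _ y _ hxA hyA => hCidx x y hxA hyA
    obtain ⟨t, htf, htC⟩ : ∃ t ∈ fix α, t ∉ C := by
      by_contra hne
      push Not at hne
      exact hCtop (top_le_iff.1 (s1.trans (sup_le hne le_rfl)))
    obtain ⟨g, hg⟩ : ∃ g : G, ⁅t, g⁆ ∉ L 2 := by
      by_contra hne
      push Not at hne
      exact htC (jacobi (hcom 2) hne)
    set D := cen (L 2) {t} with hD
    have memD : ∀ x, x ∈ D ↔ ⁅t, x⁆ ∈ L 2 := fun x => by
      rw [hD, mem_cen]; simp
    have hDidx : ∀ x y : G, x ∉ D → y ∉ D → x⁻¹ * y ∈ D := by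
      intro x y hx hy
      rw [memD] at hx hy ⊢
      refine cent_step (idx2 (hanti (by norm_num)) hc12 ?_ ?_ hx hy)
      · exact hcom 0 t (Subgroup.mem_top t) x
      · exact hcom 0 t (Subgroup.mem_top t) y
    have hDα : ∀ a ∈ D, α a ∈ D := by
      intro a ha
      rw [memD] at ha ⊢
      have := hLα 2 _ ha
      rwa [map_comm, mem_fix.1 htf] at this
    have htD : t ∈ D := by
      rw [memD, commutatorElement_self]; exact one_mem _
    have hgD : g ∉ D := fun h => hg ((memD g).1 h)
    have hG'D : commutator G ≤ D := fun z hz => (memD z).2 (comm_symm (hcom1 z hz t))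
    have hEC : C ⊓ D < C := by
      refine lt_of_le_of_ne inf_le_left fun h => ?_
      have hCD : C ≤ D := inf_eq_left.1 h
      have hgC : g ∉ C := fun h => hgD (hCD h)
      have h6 := hCD (hCidx t g htC hgC)
      exact hgD ((Subgroup.mul_mem_cancel_left _ (inv_mem htD)).1 h6)
    have hEcard := card_lt hEC
    have hEα : ∀ a ∈ C ⊓ D, α a ∈ C ⊓ D := fun a ha => ⟨hCα a ha.1, hDα a ha.2⟩
    have s2 : C ≤ fix α ⊔ (C ⊓ D) := chain hcard hp hp2 hαp hEα hCα
      fun x hx y hy hxA hyA => ⟨C.mul_mem (C.inv_mem hx) hy,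
        hDidx x y (fun h => hxA ⟨hx, h⟩) (fun h => hyA ⟨hy, h⟩)⟩
    have s3 : C ⊓ D ≤ fix α ⊔ commutator G := chain hcard hp hp2 hαp hGα hEα
      fun x hx y hy hxA hyA => idx2 (le_inf hG'C hG'D) (by omega) hx hy hxA hyA
    exact s1.trans (sup_le le_sup_left (s2.trans (sup_le le_sup_left s3)))
end
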